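/- Suppose r ≥ 2 and the bases b_1, …, b_r are multiplicatively independent. Define the greedy step g : ℕ → ℕ by g(0) = 0 and, for n ≥ 1, g(n) = n − max{B ∈ 𝓑 : B ≤ n} (the maximum exists since 1 ∈ 𝓑). Then there exists a positive real constant K such that for every integer n > 2, the number of iterations of g needed to reach 0 starting from n (i.e., the least k with g^k(n) = 0) is at most K · (log n)/(log log n). -/

import Mathlib

/-!
Two of the bases, `a` and `b`, suffice. The point is that every large `n` has a power-product
`a ^ u * b ^ v ≤ n` with `n - a ^ u * b ^ v ≤ D n / (log n) ^ δ` (`exists_gap_bound`), so that a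
greedy step divides `n` by a power of `log n`. Hence `O(log n / log log n)` steps lead from `n`
below `exp √(log n)`; after that every step still divides by at least `a / (a - 1)`, and
`O(√(log n))` further steps are enough (`iterate_bound`).

The gaps are small because `log a / log b` is not too well approximable by rationals. By Dirichlet
there is `ξ = k log a - j log b` with `0 < k ≤ Q` and `|ξ|` at most about `1 / Q`, and multiples of
`ξ` added to a multiple of `log b` come within `|ξ|` of `log n` from below. The exponents so obtained
are nonnegative provided `Q / |ξ|` is small compared with `log n`. With a lower bound
`|ξ| ≥ c / k ^ κ`, the choice of `Q` as a small power of `log n` is therefore admissible.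

The lower bound (`linear_form_lower_bound`) is Baker's theorem for two logarithms of integers in the
form due to Feldman, proved by a method of interpolation on integers. Suppose that
`Λ = u log a - v log b` satisfies `|Λ| ≤ u ^ (-C)`, and let `S` be about `log u`.
* With frequencies `ν_i = i₁ v / u + i₂`, where `i₁, i₂ < L`, the number `exp (ν_i log b)` is
  extremely close to the integer `α_i = a ^ i₁ b ^ i₂`. So the entire functions
  `F = ∑ P_i^(t₀)(z) ν_i ^ t₁ exp (ν_i log b z)` (`expF`), which are closed under differentiation,
  nearly agree at nonnegative integers with `G = ∑ P_i^(t₀)(s) ν_i ^ t₁ α_i ^ s` (`expG`), which is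
  rational with controlled denominator.
* Siegel's lemma yields integer coefficients, not all zero, such that `G` vanishes for all
  `t₀, t₁ < T` and `s < S` (`exists_auxiliary`). The `P_i` are combinations of Feldman's polynomials,
  whose derivatives at integers have denominators of size `exp O(S)` per derivative, by Chebyshev's
  bound for `lcm(1, …, S)`. With the monomial basis a factor `log S` would be lost.
* A Schwarz lemma with approximate zeros (`approx_schwarz`) shows that `G` is small, hence after
  clearing denominators an integer smaller than `1`, at `2 ^ 12` times as many points, at the price
  of halving the orders `t₀, t₁` (`vanish_step`).
* After boundedly many rounds `G` with `t₀ = t₁ = 0` has more zeros than a nontrivial exponential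
  polynomial with distinct bases `α_i` can have (`exp_poly_eq_zero`), a contradiction. It is here that
  the multiplicative independence of `a` and `b` enters; all parameters except `S` are constants.
-/

/-- `B` is a power-product of the bases `b 0, …, b (r-1)`. -/
def IsPowerProduct (r : ℕ) (b : Fin r → ℕ) (B : ℕ) : Prop :=
  ∃ α : Fin r → ℕ, B = ∏ j, b j ^ α j

/-- The bases `b 0, …, b (r-1)` are multiplicatively independent. -/
def MultIndep (r : ℕ) (b : Fin r → ℕ) : Prop :=
  ∀ α : Fin r → ℤ, (∏ j, (b j : ℝ) ^ α j) = 1 → α = 0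

/-- One step of the greedy algorithm: subtract the largest power-product
that is at most `n` (and send `0` to `0`). -/
noncomputable def greedyStep (r : ℕ) (b : Fin r → ℕ) (n : ℕ) : ℕ :=
  n - sSup {B : ℕ | IsPowerProduct r b B ∧ B ≤ n}

/-! ### Divided differences as contour integrals -/

open Complex in
/-- The contour integral `∮ f(z) / ∏ (z - x) dz` over `|z| = R`, with `x` running through the
multiset `m`. For entire `f` and nodes inside the circle it is `2πi` times the divided difference of
`f` at the nodes `m`. -/
noncomputable def nodeInt (f : ℂ → ℂ) (R : ℝ) (m : Multiset ℕ) : ℂ :=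
  ∮ z in C(0, R), f z / (m.map (fun x : ℕ => z - (x : ℂ))).prod

lemma sub_ne_zero_of_mem_sphere {R : ℝ} {z : ℂ} (hz : z ∈ Metric.sphere (0 : ℂ) R) {x : ℕ}
    (hx : (x : ℝ) < R) : z - (x : ℂ) ≠ 0 := by
  intro h
  rw [sub_eq_zero] at h
  subst h
  simp at hz
  linarith

lemma node_prod_ne_zero {R : ℝ} {z : ℂ} (hz : z ∈ Metric.sphere (0 : ℂ) R) {m : Multiset ℕ}
    (hm : ∀ x ∈ m, (x : ℝ) < R) : (m.map (fun x : ℕ => z - (x : ℂ))).prod ≠ 0 := by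
  rw [Ne, Multiset.prod_eq_zero_iff]
  simp only [Multiset.mem_map, not_exists, not_and]
  intro x hx
  exact sub_ne_zero_of_mem_sphere hz (hm x hx)

lemma node_circleIntegrable {f : ℂ → ℂ} (hf : Differentiable ℂ f) {R : ℝ} (hR : 0 ≤ R)
    {m : Multiset ℕ} (hm : ∀ x ∈ m, (x : ℝ) < R) :
    CircleIntegrable (fun z => f z / (m.map (fun x : ℕ => z - (x : ℂ))).prod) 0 R := by
  apply ContinuousOn.circleIntegrable hR
  apply ContinuousOn.div hf.continuous.continuousOn
  · apply Continuous.continuousOn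
    induction m using Multiset.induction_on with
    | empty => simpa using continuous_const
    | cons a s ih =>
      simp only [Multiset.map_cons, Multiset.prod_cons]
      exact (by fun_prop : Continuous fun z : ℂ => z - (a : ℂ)).mul
        (ih fun x hx => hm x (Multiset.mem_cons_of_mem hx))
  · intro z hz
    exact node_prod_ne_zero hz hm

/-- The recursion for divided differences at two distinct nodes. -/
lemma nodeInt_cons_cons {f : ℂ → ℂ} (hf : Differentiable ℂ f) {R : ℝ} (hR : 0 ≤ R)
    {m : Multiset ℕ} {x y : ℕ} (hm : ∀ x ∈ m, (x : ℝ) < R) (hx : (x : ℝ) < R) (hy : (y : ℝ) < R)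
    (hxy : x ≠ y) :
    nodeInt f R (x ::ₘ y ::ₘ m) =
      (nodeInt f R (x ::ₘ m) - nodeInt f R (y ::ₘ m)) / ((x : ℂ) - y) := by
  have hxy' : (x : ℂ) - y ≠ 0 := by
    rw [sub_ne_zero]; exact_mod_cast hxy
  rw [eq_div_iff hxy', mul_comm]
  unfold nodeInt
  rw [← circleIntegral.integral_sub (node_circleIntegrable hf hR (by simpa using ⟨hx, hm⟩))
    (node_circleIntegrable hf hR (by simpa using ⟨hy, hm⟩)), ← circleIntegral.integral_const_mul]
  apply circleIntegral.integral_congr hR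
  intro z hz
  have h1 := sub_ne_zero_of_mem_sphere hz hx
  have h2 := sub_ne_zero_of_mem_sphere hz hy
  have h3 : (m.map (fun x : ℕ => z - (x : ℂ))).prod ≠ 0 := node_prod_ne_zero hz hm
  simp only [Multiset.map_cons, Multiset.prod_cons]
  field_simp
  ring

lemma one_le_norm_nat_sub {x y : ℕ} (hxy : x ≠ y) : 1 ≤ ‖(x : ℂ) - y‖ := by
  have h : ‖(x : ℂ) - y‖ = ((|(x : ℤ) - (y : ℤ)| : ℤ) : ℝ) := by
    rw [Int.cast_abs, ← Complex.norm_intCast]; push_cast; rfl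
  rw [h]
  have : (x : ℤ) - y ≠ 0 := by omega
  exact_mod_cast Int.one_le_abs this

/-- Divided differences at integer nodes are controlled by the confluent ones: the nodes are at
mutual distance at least `1`, so every use of the recursion at most doubles the bound. -/
lemma norm_nodeInt_le {f : ℂ → ℂ} (hf : Differentiable ℂ f) {R δ : ℝ} (hR : 0 ≤ R) {M τ : ℕ}
    (hM : (M : ℝ) < R)
    (hδ : ∀ s ≤ M, ∀ t < τ, ‖nodeInt f R (Multiset.replicate (t + 1) s)‖ ≤ δ)
    (n : ℕ) : ∀ m : Multiset ℕ, m.card = n + 1 → n < τ → (∀ x ∈ m, x ≤ M) →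
      ‖nodeInt f R m‖ ≤ 2 ^ n * δ := by
  have hlt : ∀ x : ℕ, x ≤ M → (x : ℝ) < R := fun x hx =>
    lt_of_le_of_lt (by exact_mod_cast hx) hM
  induction n with
  | zero =>
    intro m hm hτ hx
    obtain ⟨x, rfl⟩ := Multiset.card_eq_one.mp hm
    simpa using hδ x (hx x (by simp)) 0 hτ
  | succ n ih =>
    intro m hm hτ hx
    have hδ0 : 0 ≤ δ := (norm_nonneg _).trans (hδ 0 (Nat.zero_le _) 0 (by omega))
    obtain ⟨x, hxm⟩ := Multiset.card_pos_iff_exists_mem.mp (by omega : 0 < m.card)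
    obtain ⟨m0, rfl⟩ := Multiset.exists_cons_of_mem hxm
    by_cases h : ∀ y ∈ m0, y = x
    · have : m0 = Multiset.replicate (n + 1) x := by
        rw [Multiset.eq_replicate]
        exact ⟨by simpa using hm, h⟩
      subst this
      rw [← Multiset.replicate_succ]
      refine (hδ x (hx x (by simp)) (n + 1) hτ).trans ?_
      exact le_mul_of_one_le_left hδ0 (one_le_pow₀ (by norm_num))
    · push Not at h
      obtain ⟨y, hy, hyx⟩ := h
      obtain ⟨m1, rfl⟩ := Multiset.exists_cons_of_mem hy
      have hm1 : ∀ z ∈ m1, z ≤ M := fun z hz => hx z (by simp [hz])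
      have hcard : m1.card = n := by simpa using hm
      have hx' := hx x (by simp)
      have hy' := hx y (by simp)
      rw [nodeInt_cons_cons hf hR (fun z hz => hlt z (hm1 z hz)) (hlt _ hx') (hlt _ hy') hyx.symm,
        norm_div]
      have h1 := ih (x ::ₘ m1) (by simp [hcard]) (by omega) (by simpa using ⟨hx', hm1⟩)
      have h2 := ih (y ::ₘ m1) (by simp [hcard]) (by omega) (by simpa using ⟨hy', hm1⟩)
      refine (div_le_self (norm_nonneg _) (one_le_norm_nat_sub hyx.symm)).trans ?_
      refine (norm_sub_le _ _).trans ?_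
      rw [pow_succ]
      linarith

open Complex in
lemma nodeInt_singleton {f : ℂ → ℂ} (hf : Differentiable ℂ f) {R : ℝ} {x : ℕ} (hx : (x : ℝ) < R) :
    nodeInt f R {x} = 2 * Real.pi * I * f x := by
  unfold nodeInt
  have := Complex.circleIntegral_sub_inv_smul_of_differentiable_on_off_countable (s := ∅)
    (c := 0) (R := R) (w := x) (f := f) Set.countable_empty (by simpa using hx)
    hf.continuous.continuousOn (fun z _ => hf z)
  simp only [smul_eq_mul] at this
  rw [← this]
  congr 1
  ext z
  simp [div_eq_mul_inv, mul_comm]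

open Complex in
/-- One extra simple node `s₁`: up to a controlled error only the residue at `s₁` matters. -/
lemma norm_nodeInt_cons_sub_le {f : ℂ → ℂ} (hf : Differentiable ℂ f) {R δ : ℝ} (hR : 0 ≤ R)
    {M τ s₁ : ℕ} (hM : (M : ℝ) < R) (hs₁ : M < s₁) (hs₁R : (s₁ : ℝ) < R)
    (hδ : ∀ s ≤ M, ∀ t < τ, ‖nodeInt f R (Multiset.replicate (t + 1) s)‖ ≤ δ) (hδ0 : 0 ≤ δ)
    (m : Multiset ℕ) : m.card ≤ τ → (∀ x ∈ m, x ≤ M) →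
      ‖nodeInt f R (s₁ ::ₘ m) -
        2 * Real.pi * I * f s₁ / (m.map (fun x : ℕ => (s₁ : ℂ) - (x : ℂ))).prod‖
        ≤ 4 ^ m.card * δ := by
  have hlt : ∀ x : ℕ, x ≤ M → (x : ℝ) < R := fun x hx =>
    lt_of_le_of_lt (by exact_mod_cast hx) hM
  induction m using Multiset.induction_on with
  | empty =>
    intro _ _
    simp [nodeInt_singleton hf hs₁R, hδ0]
  | cons x m ih =>
    intro hc hx
    have hm : ∀ z ∈ m, z ≤ M := fun z hz => hx z (by simp [hz])
    have hx' := hx x (by simp)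
    rw [Multiset.card_cons] at hc
    have h1 := ih (by omega) hm
    have h2 := norm_nodeInt_le hf hR hM hδ m.card (x ::ₘ m) (by simp) (by omega)
      (by simpa using ⟨hx', hm⟩)
    have hne : s₁ ≠ x := by omega
    rw [nodeInt_cons_cons hf hR (fun z hz => hlt z (hm z hz)) hs₁R (hlt _ hx') hne]
    simp only [Multiset.map_cons, Multiset.prod_cons, Multiset.card_cons]
    have hne' : (s₁ : ℂ) - x ≠ 0 := by rw [sub_ne_zero]; exact_mod_cast hne
    have e : (nodeInt f R (s₁ ::ₘ m) - nodeInt f R (x ::ₘ m)) / ((s₁ : ℂ) - x) -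
        2 * Real.pi * I * f s₁ /
          (((s₁ : ℂ) - x) * (m.map (fun x : ℕ => (s₁ : ℂ) - (x : ℂ))).prod) =
        ((nodeInt f R (s₁ ::ₘ m) -
        2 * Real.pi * I * f s₁ / (m.map (fun x : ℕ => (s₁ : ℂ) - (x : ℂ))).prod)
          - nodeInt f R (x ::ₘ m)) / ((s₁ : ℂ) - x) := by
      rw [mul_comm ((s₁ : ℂ) - x), ← div_div]
      ring
    rw [e, norm_div]
    refine (div_le_self (norm_nonneg _) (one_le_norm_nat_sub hne)).trans ?_
    refine (norm_sub_le _ _).trans ?_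
    have h3 : (2 : ℝ) ^ m.card ≤ 4 ^ m.card := by gcongr; norm_num
    have h4 : (2 : ℝ) ^ m.card * δ ≤ 4 ^ m.card * δ := by gcongr
    have h5 : 0 ≤ (4 : ℝ) ^ m.card * δ := by positivity
    rw [pow_succ]
    linarith

/-- Partial fractions of `M! / (z (z-1) ⋯ (z-M))`, with a bound for the coefficients. -/
lemma exists_partialFraction (M : ℕ) : ∃ c : ℕ → ℂ, (∑ s ∈ Finset.range (M + 1), ‖c s‖) ≤ 2 ^ M ∧
    ∀ z : ℂ, (∀ s ≤ M, z - (s : ℂ) ≠ 0) →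
      (M.factorial : ℂ) / ∏ s ∈ Finset.range (M + 1), (z - (s : ℂ)) =
        ∑ s ∈ Finset.range (M + 1), c s / (z - (s : ℂ)) := by
  induction M with
  | zero => exact ⟨fun _ => 1, by simp, by simp⟩
  | succ M ih =>
    obtain ⟨c, hc, h⟩ := ih
    refine ⟨fun s => (if s = 0 then 0 else c (s - 1)) - (if s = M + 1 then 0 else c s), ?_, ?_⟩
    · have h1 : (∑ s ∈ Finset.range (M + 1 + 1), ‖(if s = 0 then 0 else c (s - 1))‖) =
          ∑ s ∈ Finset.range (M + 1), ‖c s‖ := by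
        rw [Finset.sum_range_succ']; simp
      have h2 : (∑ s ∈ Finset.range (M + 1 + 1), ‖(if s = M + 1 then 0 else c s)‖) =
          ∑ s ∈ Finset.range (M + 1), ‖c s‖ := by
        rw [Finset.sum_range_succ]
        simp only [if_true, norm_zero, add_zero]
        apply Finset.sum_congr rfl
        intro s hs
        rw [if_neg (by have := Finset.mem_range.mp hs; omega)]
      refine (Finset.sum_le_sum fun s _ => norm_sub_le _ _).trans ?_
      rw [Finset.sum_add_distrib, h1, h2, pow_succ]
      linarith
    · intro z hz
      have e1 := h z (fun s hs => hz s (by omega))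
      have e2 := h (z - 1) (fun s hs => by
        have := hz (s + 1) (by omega)
        push_cast at this
        intro h0; apply this; rw [← h0]; ring)
      have p1 : ∏ s ∈ Finset.range (M + 1), (z - (s : ℂ)) ≠ 0 :=
        Finset.prod_ne_zero_iff.mpr fun s hs => hz s (by have := Finset.mem_range.mp hs; omega)
      have p2 : ∏ s ∈ Finset.range (M + 1), (z - 1 - (s : ℂ)) ≠ 0 :=
        Finset.prod_ne_zero_iff.mpr fun s hs => by
          have := hz (s + 1) (by have := Finset.mem_range.mp hs; omega)
          push_cast at this
          intro h0; apply this; rw [← h0]; ring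
      have q1 : ∏ s ∈ Finset.range (M + 1 + 1), (z - (s : ℂ)) =
          (∏ s ∈ Finset.range (M + 1), (z - (s : ℂ))) * (z - (M + 1 : ℂ)) := by
        rw [Finset.prod_range_succ]; push_cast; ring
      have q2 : ∏ s ∈ Finset.range (M + 1 + 1), (z - (s : ℂ)) =
          (∏ s ∈ Finset.range (M + 1), (z - 1 - (s : ℂ))) * z := by
        rw [Finset.prod_range_succ']
        push_cast
        congr 1
        · apply Finset.prod_congr rfl; intros; ring
        · ring
      have hz0 : z ≠ 0 := by simpa using hz 0 (by omega)
      have hz1 : z - (M + 1 : ℂ) ≠ 0 := by simpa using hz (M + 1) le_rfl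
      have key : ((M + 1).factorial : ℂ) / ∏ s ∈ Finset.range (M + 1 + 1), (z - (s : ℂ)) =
          (M.factorial : ℂ) / ∏ s ∈ Finset.range (M + 1), (z - 1 - (s : ℂ)) -
          (M.factorial : ℂ) / ∏ s ∈ Finset.range (M + 1), (z - (s : ℂ)) := by
        have r1 : (M.factorial : ℂ) / ∏ s ∈ Finset.range (M + 1), (z - 1 - (s : ℂ)) =
            M.factorial * z / ∏ s ∈ Finset.range (M + 1 + 1), (z - (s : ℂ)) := by
          rw [q2]; field_simp
        have r2 : (M.factorial : ℂ) / ∏ s ∈ Finset.range (M + 1), (z - (s : ℂ)) =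
            M.factorial * (z - (M + 1 : ℂ)) /
              ∏ s ∈ Finset.range (M + 1 + 1), (z - (s : ℂ)) := by
          rw [q1]; field_simp
        rw [r1, r2, Nat.factorial_succ]
        push_cast
        ring
      rw [key, e1, e2]
      simp only [sub_div, Finset.sum_sub_distrib]
      congr 1
      · rw [Finset.sum_range_succ' _ (M + 1)]
        simp [sub_sub, add_comm]
      · rw [Finset.sum_range_succ _ (M + 1)]
        simp only [if_true, zero_div, add_zero]
        apply Finset.sum_congr rfl
        intro s hs
        rw [if_neg (by have := Finset.mem_range.mp hs; omega)]

/-! ### The Schwarz lemma with approximate zeros -/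

open Complex in
/-- **Schwarz lemma with approximate zeros.** If the confluent divided differences of `f` of order
below `τ` at the integers `0, …, M` are small, namely at most `δ / 2π`, then `f s₁` is, up to an
error proportional to `δ`, smaller than a bound for `f` on `|z| = R` by a factor of about
`((R - M) / s₁) ^ ((M + 1) τ)`. The proof integrates `f(z) K(z) ^ τ / (z - s₁)` over `|z| = R` for
`K(z) = M! / (z (z - 1) ⋯ (z - M))`: the poles at `0, …, M` contribute little because the partial
fraction coefficients of `K` are bounded by `2 ^ M`. -/
lemma approx_schwarz {f : ℂ → ℂ} (hf : Differentiable ℂ f) {R δ Bd : ℝ}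
    {M τ s₁ : ℕ} (hs₁ : M < s₁) (hs₁R : (s₁ : ℝ) < R)
    (hBd : ∀ z : ℂ, ‖z‖ = R → ‖f z‖ ≤ Bd)
    (hδ : ∀ s ≤ M, ∀ t < τ, ‖nodeInt f R (Multiset.replicate (t + 1) s)‖ ≤ δ) (hδ0 : 0 ≤ δ) :
    ‖f s₁‖ ≤ R / (R - s₁) * Bd * (s₁ / (R - M)) ^ ((M + 1) * τ) +
      ((M + 1) * 2 ^ s₁ * 2 ^ M * 4) ^ τ * δ := by
  have hMs : (M : ℝ) < s₁ := by exact_mod_cast hs₁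
  have hM : (M : ℝ) < R := hMs.trans hs₁R
  have hR : 0 < R := lt_of_le_of_lt (Nat.cast_nonneg _) hM
  obtain ⟨c, hc, hK⟩ := exists_partialFraction M
  have hlt : ∀ s ≤ M, (s : ℝ) < R := fun s hs => lt_of_le_of_lt (by exact_mod_cast hs) hM
  have expand : ∀ z : ℂ, (∀ s ≤ M, z - (s : ℂ) ≠ 0) →
      ((M.factorial : ℂ) / ∏ s ∈ Finset.range (M + 1), (z - (s : ℂ))) ^ τ =
      ∑ σ : Fin τ → Fin (M + 1), (∏ k, c (σ k)) *
        ((Finset.univ.val.map (fun k => (σ k : ℕ))).map (fun x : ℕ => z - (x : ℂ))).prod⁻¹ := by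
    intro z hz
    rw [hK z hz, Finset.sum_range, Fintype.sum_pow]
    refine Finset.sum_congr rfl fun σ _ => ?_
    rw [Multiset.map_map]
    change _ = _ * (∏ k, (z - ((σ k : ℕ) : ℂ)))⁻¹
    rw [Finset.prod_div_distrib, div_eq_mul_inv]
  set D : ℂ := ∏ s ∈ Finset.range (M + 1), ((s₁ : ℂ) - (s : ℂ)) with hD
  have hs₁ne : ∀ s ≤ M, (s₁ : ℂ) - (s : ℂ) ≠ 0 := fun s hs => by
    rw [sub_ne_zero]; exact_mod_cast (by omega : s₁ ≠ s)
  have hmem : ∀ σ : Fin τ → Fin (M + 1),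
      ∀ x ∈ Finset.univ.val.map (fun k => (σ k : ℕ)), x ≤ M := by
    intro σ x hx
    obtain ⟨k, -, rfl⟩ := Multiset.mem_map.mp hx
    have := (σ k).2
    omega
  have hmem' : ∀ σ : Fin τ → Fin (M + 1),
      ∀ x ∈ s₁ ::ₘ Finset.univ.val.map (fun k => (σ k : ℕ)), (x : ℝ) < R := by
    intro σ x hx
    rcases Multiset.mem_cons.mp hx with rfl | hx
    · exact hs₁R
    · exact hlt x (hmem σ x hx)
  -- the contour integral of `f K ^ τ / (z - s₁)`, expanded by partial fractions
  have hint : (∮ z in C(0, R), f z * ((M.factorial : ℂ) /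
      ∏ s ∈ Finset.range (M + 1), (z - (s : ℂ))) ^ τ / (z - s₁)) =
      ∑ σ : Fin τ → Fin (M + 1), (∏ k, c (σ k)) *
        nodeInt f R (s₁ ::ₘ Finset.univ.val.map (fun k => (σ k : ℕ))) := by
    unfold nodeInt
    simp_rw [← circleIntegral.integral_const_mul]
    rw [← circleIntegral.integral_fun_sum]
    · apply circleIntegral.integral_congr hR.le
      intro z hz
      simp only []
      rw [expand z (fun s hs => sub_ne_zero_of_mem_sphere hz (hlt s hs)), Finset.mul_sum,
        Finset.sum_div]
      refine Finset.sum_congr rfl fun σ _ => ?_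
      simp only [Multiset.map_cons, Multiset.prod_cons]
      rw [div_eq_mul_inv, div_eq_mul_inv, mul_inv]
      ring
    · intro σ _
      exact (node_circleIntegrable hf hR.le (hmem' σ)).const_fun_smul
  have hval : 2 * Real.pi * I * f s₁ * ((M.factorial : ℂ) / D) ^ τ =
      ∑ σ : Fin τ → Fin (M + 1), (∏ k, c (σ k)) * (2 * Real.pi * I * f s₁ /
        ((Finset.univ.val.map (fun k => (σ k : ℕ))).map
          (fun x : ℕ => (s₁ : ℂ) - (x : ℂ))).prod) := by
    rw [hD, expand s₁ hs₁ne, Finset.mul_sum]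
    refine Finset.sum_congr rfl fun σ _ => ?_
    rw [div_eq_mul_inv]; ring
  have herr : ‖(∮ z in C(0, R), f z * ((M.factorial : ℂ) /
      ∏ s ∈ Finset.range (M + 1), (z - (s : ℂ))) ^ τ / (z - s₁)) -
      2 * Real.pi * I * f s₁ * ((M.factorial : ℂ) / D) ^ τ‖ ≤ (2 ^ M * 4) ^ τ * δ := by
    rw [hint, hval, ← Finset.sum_sub_distrib]
    calc _ ≤ ∑ σ : Fin τ → Fin (M + 1), (∏ k, ‖c (σ k)‖) * (4 ^ τ * δ) := by
          refine (norm_sum_le _ _).trans (Finset.sum_le_sum fun σ _ => ?_)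
          rw [← mul_sub, norm_mul, norm_prod]
          gcongr
          have := norm_nodeInt_cons_sub_le hf hR.le hM hs₁ hs₁R hδ hδ0
            (Finset.univ.val.map (fun k => (σ k : ℕ))) (by simp) (hmem σ)
          simpa using this
      _ = (∑ s ∈ Finset.range (M + 1), ‖c s‖) ^ τ * (4 ^ τ * δ) := by
          rw [← Finset.sum_mul, Finset.sum_range, Fintype.sum_pow]
      _ ≤ (2 ^ M) ^ τ * (4 ^ τ * δ) := by gcongr
      _ = _ := by rw [mul_pow]; ring
  have hcont : ‖(∮ z in C(0, R), f z * ((M.factorial : ℂ) /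
      ∏ s ∈ Finset.range (M + 1), (z - (s : ℂ))) ^ τ / (z - s₁))‖ ≤
      2 * Real.pi * R * (Bd * (M.factorial / (R - M) ^ (M + 1)) ^ τ / (R - s₁)) := by
    apply circleIntegral.norm_integral_le_of_norm_le_const hR.le
    intro z hz
    have hzR : ‖z‖ = R := by simpa using hz
    have hnat : ∀ s : ℕ, R - s ≤ ‖z - (s : ℂ)‖ := fun s => by
      have := norm_sub_norm_le z (s : ℂ)
      rw [hzR] at this
      simpa using this
    have hBd' := hBd z hzR
    have hBd0 : 0 ≤ Bd := (norm_nonneg _).trans hBd'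
    have h1 : 0 < R - s₁ := by linarith
    have h2 : 0 < R - M := by linarith
    rw [norm_div, norm_mul, norm_pow, norm_div, norm_prod, Complex.norm_natCast]
    gcongr
    · rw [← Finset.card_range (M + 1), ← Finset.prod_const]
      simp only [Finset.card_range]
      refine Finset.prod_le_prod (fun _ _ => h2.le) fun s hs => ?_
      refine le_trans ?_ (hnat s)
      have : (s : ℝ) ≤ M := by
        exact_mod_cast (by have := Finset.mem_range.mp hs; omega : s ≤ M)
      linarith
    · exact hnat s₁
  -- size of `D`
  have hDdesc : D = ((s₁.descFactorial (M + 1) : ℕ) : ℂ) := by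
    rw [hD, Nat.descFactorial_eq_prod_range, Nat.cast_prod]
    refine Finset.prod_congr rfl fun s hs => ?_
    rw [Nat.cast_sub (by have := Finset.mem_range.mp hs; omega)]
  have hDn : ‖D‖ = (s₁.descFactorial (M + 1) : ℝ) := by rw [hDdesc, Complex.norm_natCast]
  have hDpos : 0 < ‖D‖ := by
    rw [hDn]
    exact_mod_cast Nat.pos_of_ne_zero (by
      rw [Ne, Nat.descFactorial_eq_zero_iff_lt]; omega)
  have hD1 : ‖D‖ ≤ (s₁ : ℝ) ^ (M + 1) := by
    rw [hDn]; exact_mod_cast Nat.descFactorial_le_pow _ _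
  have hfac : (0 : ℝ) < M.factorial := by exact_mod_cast M.factorial_pos
  have hD2 : ‖D‖ / M.factorial ≤ (M + 1) * 2 ^ s₁ := by
    rw [div_le_iff₀ hfac, hDn, Nat.descFactorial_eq_factorial_mul_choose, Nat.factorial_succ]
    have : ((s₁.choose (M + 1) : ℕ) : ℝ) ≤ 2 ^ s₁ := by
      exact_mod_cast Nat.choose_le_two_pow _ _
    push_cast
    calc ((M : ℝ) + 1) * M.factorial * (s₁.choose (M + 1))
        ≤ ((M : ℝ) + 1) * M.factorial * 2 ^ s₁ := by gcongr
      _ = _ := by ring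
  have hmain : 2 * Real.pi * ‖f s₁‖ * (M.factorial / ‖D‖) ^ τ ≤
      2 * Real.pi * R * (Bd * (M.factorial / (R - M) ^ (M + 1)) ^ τ / (R - s₁)) +
        (2 ^ M * 4) ^ τ * δ := by
    have h1 : ‖2 * Real.pi * I * f s₁ * ((M.factorial : ℂ) / D) ^ τ‖ =
        2 * Real.pi * ‖f s₁‖ * (M.factorial / ‖D‖) ^ τ := by
      simp [abs_of_pos Real.pi_pos]
    rw [← h1]
    have := norm_sub_norm_le (2 * Real.pi * I * f s₁ * ((M.factorial : ℂ) / D) ^ τ)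
      (∮ z in C(0, R), f z * ((M.factorial : ℂ) /
      ∏ s ∈ Finset.range (M + 1), (z - (s : ℂ))) ^ τ / (z - s₁))
    rw [norm_sub_rev] at this
    linarith
  have hBd0 : 0 ≤ Bd := (norm_nonneg _).trans (hBd R (by simp [hR.le]))
  have h1 : 0 < R - s₁ := by linarith
  have h2 : 0 < R - M := by linarith
  have hpi : 1 ≤ 2 * Real.pi := by linarith [Real.pi_gt_three]
  have e1 : ‖f s₁‖ = (2 * Real.pi * ‖f s₁‖ * (M.factorial / ‖D‖) ^ τ) *
      ((‖D‖ / M.factorial) ^ τ / (2 * Real.pi)) := by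
    have : (M.factorial / ‖D‖) ^ τ * (‖D‖ / M.factorial) ^ τ = 1 := by
      rw [← mul_pow, div_mul_div_cancel₀ hDpos.ne', div_self hfac.ne', one_pow]
    calc ‖f s₁‖ = ‖f s₁‖ * ((M.factorial / ‖D‖) ^ τ * (‖D‖ / M.factorial) ^ τ) *
          (2 * Real.pi / (2 * Real.pi)) := by rw [this, div_self (by positivity)]; ring
      _ = _ := by ring
  have g1 : (M.factorial / (R - M) ^ (M + 1)) ^ τ * (‖D‖ / M.factorial) ^ τ =
      (‖D‖ / (R - M) ^ (M + 1)) ^ τ := by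
    rw [← mul_pow]
    congr 1
    field_simp
  have g2 : (2 ^ M * 4 : ℝ) ^ τ * (‖D‖ / M.factorial) ^ τ =
      (‖D‖ / M.factorial * (2 ^ M * 4)) ^ τ := by
    rw [← mul_pow, mul_comm]
  rw [e1]
  calc _ ≤ (2 * Real.pi * R * (Bd * (M.factorial / (R - M) ^ (M + 1)) ^ τ / (R - s₁)) +
        (2 ^ M * 4) ^ τ * δ) * ((‖D‖ / M.factorial) ^ τ / (2 * Real.pi)) := by gcongr
    _ = R / (R - s₁) * Bd * (‖D‖ / (R - M) ^ (M + 1)) ^ τ +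
        (‖D‖ / M.factorial * (2 ^ M * 4)) ^ τ * δ / (2 * Real.pi) := by
      rw [← g1, ← g2]
      have : 2 * Real.pi * (2 * Real.pi)⁻¹ = 1 := mul_inv_cancel₀ (by positivity)
      linear_combination (R / (R - s₁) * Bd * ((M.factorial / (R - M) ^ (M + 1)) ^ τ *
        (‖D‖ / M.factorial) ^ τ)) * this
    _ ≤ R / (R - s₁) * Bd * ((s₁ : ℝ) ^ (M + 1) / (R - M) ^ (M + 1)) ^ τ +
        ((M + 1) * 2 ^ s₁ * (2 ^ M * 4)) ^ τ * δ / 1 := by gcongr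
    _ = _ := by rw [← div_pow, ← pow_mul, div_one]; ring

/-! ### Feldman's binomial polynomials -/

open Polynomial in
/-- The binomial polynomial `X (X - 1) ⋯ (X - i + 1) / i!`. -/
noncomputable def binPoly : ℕ → ℂ[X]
  | 0 => 1
  | i + 1 => C ((i + 1 : ℂ)⁻¹) * ((X - C (i : ℂ)) * binPoly i)

open Polynomial in
lemma binPoly_succ (i : ℕ) :
    C (i + 1 : ℂ) * binPoly (i + 1) = (X - C (i : ℂ)) * binPoly i := by
  have h : (i + 1 : ℂ) ≠ 0 := by exact_mod_cast i.succ_ne_zero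
  rw [binPoly, ← mul_assoc, ← C_mul, mul_inv_cancel₀ h, C_1, one_mul]

open Polynomial in
lemma binPoly_eval_nat (i s : ℕ) : (binPoly i).eval (s : ℂ) = (s.choose i : ℂ) := by
  induction i with
  | zero => simp [binPoly]
  | succ i ih =>
    have h : (i + 1 : ℂ) ≠ 0 := by exact_mod_cast i.succ_ne_zero
    rw [binPoly]
    simp only [eval_mul, eval_C, eval_sub, eval_X, ih]
    rw [inv_mul_eq_iff_eq_mul₀ h]
    rcases le_or_gt i s with his | his
    · have := Nat.choose_succ_right_eq s i
      have h2 : ((s.choose (i + 1) * (i + 1) : ℕ) : ℂ) = ((s.choose i * (s - i) : ℕ) : ℂ) := by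
        rw [this]
      rw [Nat.cast_mul, Nat.cast_mul, Nat.cast_sub his] at h2
      push_cast at h2
      linear_combination -h2
    · rw [Nat.choose_eq_zero_of_lt his, Nat.choose_eq_zero_of_lt (by omega)]
      simp

open Polynomial in
lemma norm_binPoly_eval_le (i ρ : ℕ) {z : ℂ} (hz : ‖z‖ ≤ ρ) :
    ‖(binPoly i).eval z‖ ≤ ((ρ + i).choose i : ℝ) := by
  induction i with
  | zero => simp [binPoly]
  | succ i ih =>
    have h : (0 : ℝ) < i + 1 := by positivity
    have h1 : ‖((i : ℂ) + 1)‖ = (i : ℝ) + 1 := by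
      exact_mod_cast Complex.norm_natCast (i + 1)
    rw [binPoly]
    simp only [eval_mul, eval_C, eval_sub, eval_X, norm_mul, norm_inv, h1]
    rw [inv_mul_le_iff₀ h]
    have h2 : ‖z - (i : ℂ)‖ ≤ ρ + i := (norm_sub_le _ _).trans (by simpa using hz)
    have h3 := Nat.add_one_mul_choose_eq (ρ + i) i
    have h4 : (((ρ + i + 1) * (ρ + i).choose i : ℕ) : ℝ) =
      (((ρ + i + 1).choose (i + 1) * (i + 1) : ℕ) : ℝ) := by rw [h3]
    push_cast at h4
    calc ‖z - (i : ℂ)‖ * ‖(binPoly i).eval z‖ ≤ (ρ + i + 1) * ((ρ + i).choose i : ℝ) := by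
          gcongr; linarith
      _ = _ := by rw [h4, mul_comm]; rfl

open Polynomial in
lemma norm_binPoly_eval_le' (i ρ : ℕ) {z : ℂ} (hz : ‖z‖ ≤ ρ) :
    ‖(binPoly i).eval z‖ ≤ 2 ^ (ρ + i) :=
  (norm_binPoly_eval_le i ρ hz).trans (by exact_mod_cast Nat.choose_le_two_pow _ _)

open Polynomial in
/-- The power series identity `D = log (1 + Δ)`, applied to binomial polynomials. -/
lemma derivative_binPoly (i : ℕ) : derivative (binPoly i) =
    ∑ k ∈ Finset.range i, C ((-1 : ℂ) ^ k / (k + 1)) * binPoly (i - 1 - k) := by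
  induction i with
  | zero => simp [binPoly]
  | succ i ih =>
    have h : (i + 1 : ℂ) ≠ 0 := by exact_mod_cast i.succ_ne_zero
    have hC : (C (i + 1 : ℂ) : ℂ[X]) ≠ 0 := Polynomial.C_ne_zero.mpr h
    apply mul_left_cancel₀ hC
    have h1 : C (i + 1 : ℂ) * derivative (binPoly (i + 1)) =
        binPoly i + (X - C (i : ℂ)) * derivative (binPoly i) := by
      rw [← derivative_C_mul, binPoly_succ, derivative_mul]
      simp
    rw [h1, ih, Finset.mul_sum, Finset.mul_sum, Nat.add_sub_cancel]
    have h2 : ∀ k ∈ Finset.range i,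
        (X - C (i : ℂ)) * (C ((-1 : ℂ) ^ k / (k + 1)) * binPoly (i - 1 - k)) =
        C ((-1 : ℂ) ^ k / (k + 1) * (i - k)) * binPoly (i - k) -
          C ((-1 : ℂ) ^ k) * binPoly (i - 1 - k) := by
      intro k hk
      have hk := Finset.mem_range.mp hk
      have hk1 : (k + 1 : ℂ) ≠ 0 := by exact_mod_cast k.succ_ne_zero
      obtain ⟨j, rfl⟩ : ∃ j, i = j + 1 + k := ⟨i - 1 - k, by omega⟩
      rw [show j + 1 + k - 1 - k = j by omega, show j + 1 + k - k = j + 1 by omega]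
      have e : (((j + 1 + k : ℕ) : ℂ) - k) = j + 1 := by push_cast; ring
      rw [e, C_mul, mul_assoc, binPoly_succ]
      have e2 : C ((-1 : ℂ) ^ k) = C ((-1 : ℂ) ^ k / (k + 1)) * C (k + 1 : ℂ) := by
        rw [← C_mul, div_mul_cancel₀ _ hk1]
      rw [e2]
      push_cast
      simp only [C_add, C_1]
      ring
    rw [Finset.sum_congr rfl h2, Finset.sum_sub_distrib]
    have h3 : ∀ k ∈ Finset.range (i + 1),
        C (i + 1 : ℂ) * (C ((-1 : ℂ) ^ k / (k + 1)) * binPoly (i - k)) =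
        C ((-1 : ℂ) ^ k / (k + 1) * (i - k)) * binPoly (i - k) + C ((-1 : ℂ) ^ k) *
          binPoly (i - k) := by
      intro k _
      have hk1 : (k + 1 : ℂ) ≠ 0 := by exact_mod_cast k.succ_ne_zero
      rw [← mul_assoc, ← C_mul, ← add_mul, ← C_add]
      congr 2
      field_simp
      ring
    rw [Finset.sum_congr rfl h3, Finset.sum_add_distrib, Finset.sum_range_succ _ i,
      Finset.sum_range_succ' (fun k => C ((-1 : ℂ) ^ k) * binPoly (i - k)) i]
    have h4 : ∑ k ∈ Finset.range i, C ((-1 : ℂ) ^ (k + 1)) * binPoly (i - (k + 1)) =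
        -∑ k ∈ Finset.range i, C ((-1 : ℂ) ^ k) * binPoly (i - 1 - k) := by
      rw [← Finset.sum_neg_distrib]
      refine Finset.sum_congr rfl fun k _ => ?_
      rw [show i - (k + 1) = i - 1 - k by omega, pow_succ]
      simp
    rw [h4]
    simp
    ring

open Polynomial in
/-- All derivatives of `P` take, after multiplication by the matching power of `d`, integral
values at the nonnegative integers. -/
def IntDeriv (d : ℕ) (P : ℂ[X]) : Prop :=
  ∀ t s : ℕ, ∃ m : ℤ, (d : ℂ) ^ t * (derivative^[t] P).eval (s : ℂ) = m

lemma IntDeriv.mul {d : ℕ} {P Q : Polynomial ℂ} (hP : IntDeriv d P) (hQ : IntDeriv d Q) :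
    IntDeriv d (P * Q) := by
  intro t s
  rw [Polynomial.iterate_derivative_mul, Polynomial.eval_finsetSum, Finset.mul_sum]
  choose f hf using fun t => hP t s
  choose g hg using fun t => hQ t s
  refine ⟨∑ k ∈ Finset.range t.succ, (t.choose k : ℤ) * (f (t - k) * g k), ?_⟩
  push_cast
  refine Finset.sum_congr rfl fun k hk => ?_
  have hk := Finset.mem_range.mp hk
  rw [← hf, ← hg, Polynomial.eval_smul, Polynomial.eval_mul]
  rw [show (d : ℂ) ^ t = d ^ (t - k) * d ^ k by rw [← pow_add]; congr 1; omega]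
  simp only [nsmul_eq_mul]
  ring

lemma IntDeriv.one (d : ℕ) : IntDeriv d 1 := by
  intro t s
  rcases t with _ | t
  · exact ⟨1, by simp⟩
  · exact ⟨0, by simp [Polynomial.iterate_derivative_one]⟩

lemma IntDeriv.pow {d : ℕ} {P : Polynomial ℂ} (hP : IntDeriv d P) (n : ℕ) :
    IntDeriv d (P ^ n) := by
  induction n with
  | zero => simpa using IntDeriv.one d
  | succ n ih => rw [pow_succ]; exact ih.mul hP

/-- By `derivative_binPoly`, each derivative of a binomial polynomial of index at most `S` costs one
denominator dividing any common multiple of `1, …, S`. -/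
lemma intDeriv_binPoly {d S : ℕ} (hd : ∀ k, 0 < k → k ≤ S → k ∣ d) {i : ℕ} (hi : i ≤ S) :
    IntDeriv d (binPoly i) := by
  intro t
  induction t generalizing i with
  | zero =>
    intro s
    exact ⟨(s.choose i : ℤ), by simp [binPoly_eval_nat]⟩
  | succ t ih =>
    intro s
    rw [Function.iterate_succ_apply, derivative_binPoly]
    choose! f hf using fun (k : ℕ) (hk : k ≤ S) => ih hk s
    refine ⟨∑ k ∈ Finset.range i, (-1) ^ k * ((d / (k + 1) : ℕ) : ℤ) * f (i - 1 - k), ?_⟩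
    rw [Polynomial.iterate_derivative_sum, Polynomial.eval_finsetSum, Finset.mul_sum]
    rw [Int.cast_sum]
    refine Finset.sum_congr rfl fun k hk => ?_
    have hk := Finset.mem_range.mp hk
    have hk1 : (k + 1 : ℂ) ≠ 0 := by exact_mod_cast k.succ_ne_zero
    have hk2 : ((k + 1 : ℕ) : ℂ) ≠ 0 := by exact_mod_cast hk1
    rw [Int.cast_mul, Int.cast_mul, Int.cast_natCast,
      ← hf _ (by omega), Polynomial.iterate_derivative_C_mul, Polynomial.eval_mul,
      Polynomial.eval_C, Nat.cast_div (hd (k + 1) (by omega) (by omega)) hk2]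
    push_cast
    field_simp
    ring

lemma binPoly_ne_zero (i : ℕ) : binPoly i ≠ 0 := by
  intro h
  have := binPoly_eval_nat i i
  rw [h] at this
  simp at this

lemma binPoly_degree (i : ℕ) : (binPoly i).degree = i := by
  induction i with
  | zero => simp [binPoly]
  | succ i ih =>
    have h : (i + 1 : ℂ)⁻¹ ≠ 0 := inv_ne_zero (by exact_mod_cast i.succ_ne_zero)
    rw [binPoly, Polynomial.degree_C_mul h, Polynomial.degree_mul, ih, Polynomial.degree_X_sub_C]
    push_cast
    ring

/-- Feldman's polynomials: the products `B_S ^ (m / S) * B_(m % S)` of binomial polynomials.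
The `m`-th one has degree `m`, while the denominators of its derivatives at integers come from
`lcm(1, …, S)` only, and its values for `m < ℓ S` are at most exponential in `ℓ S`. -/
noncomputable def feldman (S m : ℕ) : Polynomial ℂ := binPoly S ^ (m / S) * binPoly (m % S)

lemma feldman_degree (S m : ℕ) : (feldman S m).degree = m := by
  rw [feldman, Polynomial.degree_mul, Polynomial.degree_pow, binPoly_degree, binPoly_degree]
  rw [nsmul_eq_mul]
  exact_mod_cast Nat.div_add_mod' m S

lemma feldman_linearIndependent (S : ℕ) : LinearIndependent ℂ (feldman S) :=
  Polynomial.Sequence.linearIndependent ⟨feldman S, feldman_degree S⟩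

lemma intDeriv_feldman {d S : ℕ} (hS : 0 < S) (hd : ∀ k, 0 < k → k ≤ S → k ∣ d) (m : ℕ) :
    IntDeriv d (feldman S m) :=
  ((intDeriv_binPoly hd le_rfl).pow _).mul (intDeriv_binPoly hd (Nat.mod_lt _ hS).le)

lemma norm_feldman_eval_le {S ℓ m : ℕ} (hS : 0 < S) (hm : m < ℓ * S) (ρ : ℕ) {z : ℂ}
    (hz : ‖z‖ ≤ ρ) : ‖(feldman S m).eval z‖ ≤ 2 ^ (ℓ * (ρ + S)) := by
  have h1 : m / S + 1 ≤ ℓ := Nat.div_lt_of_lt_mul (by rwa [mul_comm] at hm)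
  rw [feldman, Polynomial.eval_mul, Polynomial.eval_pow, norm_mul, norm_pow]
  calc _ ≤ ((2 : ℝ) ^ (ρ + S)) ^ (m / S) * 2 ^ (ρ + m % S) := by
        gcongr
        · exact norm_binPoly_eval_le' _ _ hz
        · exact norm_binPoly_eval_le' _ _ hz
    _ ≤ ((2 : ℝ) ^ (ρ + S)) ^ (m / S) * 2 ^ (ρ + S) := by
        gcongr
        · norm_num
        · exact (Nat.mod_lt _ hS).le
    _ = 2 ^ ((ρ + S) * (m / S + 1)) := by rw [← pow_succ, ← pow_mul]
    _ ≤ _ := by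
        rw [mul_comm ℓ]
        gcongr
        · norm_num

open Polynomial in
lemma iteratedDeriv_polynomial (P : ℂ[X]) (t : ℕ) (z : ℂ) :
    iteratedDeriv t (fun w => P.eval w) z = (derivative^[t] P).eval z := by
  induction t generalizing P with
  | zero => simp
  | succ t ih =>
    rw [iteratedDeriv_succ', Function.iterate_succ_apply, ← ih]
    congr 1
    funext w
    exact P.deriv

open Polynomial in
/-- Cauchy's estimate on the circle of radius `1` about `z`. -/
lemma norm_feldman_derivative_le {S ℓ m : ℕ} (hS : 0 < S) (hm : m < ℓ * S) (ρ : ℕ) {z : ℂ}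
    (hz : ‖z‖ ≤ ρ) (t : ℕ) :
    ‖(derivative^[t] (feldman S m)).eval z‖ ≤ t.factorial * 2 ^ (ℓ * (ρ + 1 + S)) := by
  rw [← iteratedDeriv_polynomial]
  have := Complex.norm_iteratedDeriv_le_of_forall_mem_sphere_norm_le (F := ℂ) (c := z) (R := 1) t
    (C := 2 ^ (ℓ * (ρ + 1 + S))) (f := fun w => (feldman S m).eval w) one_pos
    (Polynomial.differentiable _).diffContOnCl ?_
  · simpa using this
  · intro w hw
    apply norm_feldman_eval_le hS hm
    have h1 : ‖w - z‖ = 1 := by simpa [dist_eq_norm] using hw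
    have h2 : ‖w‖ ≤ ‖w - z‖ + ‖z‖ := by simpa using norm_add_le (w - z) z
    push_cast
    linarith

/-- Chebyshev's bound for the least common multiple of `1, …, S`. -/
lemma exists_common_multiple (S : ℕ) : ∃ d : ℕ, 0 < d ∧ (∀ k, 0 < k → k ≤ S → k ∣ d) ∧
    (d : ℝ) ≤ Real.exp (6 * S) := by
  refine ⟨S.lcmUpto, S.lcmUpto_pos, fun k hk hkS => ?_, ?_⟩
  · exact Finset.dvd_lcm (f := id) (Finset.mem_Icc.mpr ⟨hk, hkS⟩)
  · have h1 := Chebyshev.psi_eq_log_lcmUpto S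
    have h2 := Chebyshev.psi_le_const_mul_self (x := S) (Nat.cast_nonneg S)
    have hpos : (0 : ℝ) < S.lcmUpto := by exact_mod_cast S.lcmUpto_pos
    rw [← Real.log_le_iff_le_exp hpos, ← h1]
    refine h2.trans ?_
    gcongr
    have h4 : Real.log 4 = 2 * Real.log 2 := by
      rw [show (4 : ℝ) = 2 ^ 2 by norm_num, Real.log_pow]; norm_num
    linarith [Real.log_two_lt_d9]

/-! ### The zero estimate -/

open Polynomial in
/-- **Zero estimate.** An exponential polynomial `∑ P_i(s) α_i ^ s` with distinct nonzero `α_i` and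
`deg P_i < d_i` that vanishes at `0, 1, …, (∑ d_i) - 1` is trivial. -/
lemma exp_poly_eq_zero {ι : Type*} [Fintype ι] (α : ι → ℂ) (hα : Function.Injective α)
    (hα0 : ∀ i, α i ≠ 0) (N : ℕ) : ∀ (d : ι → ℕ) (P : ι → ℂ[X]), ∑ i, d i ≤ N →
      (∀ i, (P i).degree < d i) →
      (∀ s < N, ∑ i, (P i).eval (s : ℂ) * α i ^ s = 0) → ∀ i, P i = 0 := by
  classical
  induction N with
  | zero =>
    intro d P hd hP _ i
    have : d i = 0 := by
      have := Finset.single_le_sum (f := d) (fun _ _ => Nat.zero_le _) (Finset.mem_univ i)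
      omega
    have h := hP i
    rw [this] at h
    simpa using h
  | succ N ih =>
    intro d P hd hP hz
    by_cases hall : ∀ i, d i = 0
    · intro i
      have h := hP i
      rw [hall i] at h
      simpa using h
    push Not at hall
    obtain ⟨j, hj⟩ := hall
    -- the operator `f ↦ f (s + 1) - α_j f s` lowers the degree of the `j`-th coefficient
    set Q : ι → ℂ[X] := fun i => C (α i) * taylor 1 (P i) - C (α j) * P i with hQ
    have hQ0 : ∀ i, Q i = 0 := by
      refine ih (Function.update d j (d j - 1)) Q ?_ ?_ ?_
      · have h1 := Finset.sum_update_of_mem (Finset.mem_univ j) d (d j - 1)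
        have h2 := Finset.add_sum_erase Finset.univ d (Finset.mem_univ j)
        rw [← Finset.erase_eq] at h1
        omega
      · intro i
        by_cases hij : i = j
        · subst hij
          rw [Function.update_self]
          by_cases hPi : P i = 0
          · simp only [hQ, hPi]
            simp
          · have h1 : Q i = C (α i) * (taylor 1 (P i) - P i) := by simp only [hQ]; ring
            rw [h1, degree_C_mul (hα0 i)]
            have h2 : (taylor 1 (P i) - P i).degree < (taylor 1 (P i)).degree :=
              degree_sub_lt_left (degree_taylor _ _) (by simpa using hPi)
                (leadingCoeff_taylor _ _)
            rw [degree_taylor] at h2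
            have h3 := hP i
            rw [degree_eq_natDegree hPi] at h2 h3
            have h4 : (P i).natDegree < d i := by exact_mod_cast h3
            refine lt_of_lt_of_le h2 ?_
            exact_mod_cast (by omega : (P i).natDegree ≤ d i - 1)
        · rw [Function.update_of_ne hij]
          refine lt_of_le_of_lt (degree_sub_le _ _) (max_lt ?_ ?_)
          · rw [degree_C_mul (hα0 i), degree_taylor]; exact hP i
          · rw [degree_C_mul (hα0 j)]; exact hP i
      · intro s hs
        have h1 := hz s (by omega)
        have h2 := hz (s + 1) (by omega)
        have : ∀ i, (Q i).eval (s : ℂ) * α i ^ s =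
            (P i).eval (((s + 1 : ℕ)) : ℂ) * α i ^ (s + 1) -
              α j * ((P i).eval (s : ℂ) * α i ^ s) := by
          intro i
          simp only [hQ, eval_sub, eval_mul, eval_C, taylor_eval]
          push_cast
          ring
        rw [Finset.sum_congr rfl fun i _ => this i, Finset.sum_sub_distrib, ← Finset.mul_sum,
          h1, h2]
        simp
    have hne : ∀ i, i ≠ j → P i = 0 := by
      intro i hij
      by_contra hPi
      have h1 : C (α i) * taylor 1 (P i) = C (α j) * P i := sub_eq_zero.mp (hQ0 i)
      have h2 := congrArg leadingCoeff h1
      rw [leadingCoeff_mul, leadingCoeff_mul, leadingCoeff_C, leadingCoeff_C,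
        leadingCoeff_taylor] at h2
      exact hij (hα (mul_right_cancel₀ (leadingCoeff_ne_zero.mpr hPi) h2))
    intro i
    by_cases hij : i = j
    · subst hij
      have h1 : C (α i) * taylor 1 (P i) = C (α i) * P i := sub_eq_zero.mp (hQ0 i)
      have h2 : taylor 1 (P i) = P i := mul_left_cancel₀ (C_ne_zero.mpr (hα0 i)) h1
      have h0 : (P i).eval 0 = 0 := by
        have := hz 0 (by omega)
        rw [Finset.sum_eq_single i (fun k _ hk => by rw [hne k hk]; simp) (by simp)] at this
        simpa using this
      have hs : ∀ s : ℕ, (P i).eval (s : ℂ) = 0 := by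
        intro s
        induction s with
        | zero => simpa using h0
        | succ s ihs =>
          rw [← h2, taylor_eval] at ihs
          push_cast
          rwa [add_comm] at ihs ⊢
      refine eq_zero_of_infinite_isRoot _ (Set.infinite_of_injective_forall_mem
        (f := fun s : ℕ => (s : ℂ)) Nat.cast_injective fun s => hs s)
    · exact hne i hij

/-! ### Exponential polynomials and extrapolation -/

/-- Integration by parts for the confluent contour integrals. -/
lemma nodeInt_replicate_succ {f f' : ℂ → ℂ} (hf : ∀ z, HasDerivAt f (f' z) z)
    (hf' : Differentiable ℂ f') {R : ℝ} {s : ℕ} (hs : (s : ℝ) < R) (t : ℕ) :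
    (t + 1 : ℂ) * nodeInt f R (Multiset.replicate (t + 2) s) =
      nodeInt f' R (Multiset.replicate (t + 1) s) := by
  have hR : 0 ≤ R := (Nat.cast_nonneg s).trans hs.le
  have hfd : Differentiable ℂ f := fun z => (hf z).differentiableAt
  have hm : ∀ n : ℕ, ∀ x ∈ Multiset.replicate n s, (x : ℝ) < R := fun n x hx => by
    rw [Multiset.eq_of_mem_replicate hx]; exact hs
  symm
  rw [← sub_eq_zero]
  unfold nodeInt
  have hi : CircleIntegrable (fun z => (t + 1 : ℂ) *
      (f z / ((Multiset.replicate (t + 2) s).map (fun x : ℕ => z - (x : ℂ))).prod)) 0 R :=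
    (node_circleIntegrable hfd hR (hm _)).const_fun_smul
  rw [← circleIntegral.integral_const_mul, ← circleIntegral.integral_sub
    (node_circleIntegrable hf' hR (hm _)) hi]
  refine circleIntegral.integral_eq_zero_of_hasDerivWithinAt
    (f := fun z => f z / (z - s) ^ (t + 1)) hR fun z hz => ?_
  have h0 : z - (s : ℂ) ≠ 0 := sub_ne_zero_of_mem_sphere hz hs
  have h1 : HasDerivAt (fun z : ℂ => (z - s) ^ (t + 1)) ((t + 1 : ℕ) * (z - s) ^ t * 1) z :=
    ((hasDerivAt_id z).sub_const (s : ℂ)).pow (t + 1)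
  have h2 := ((hf z).div h1 (pow_ne_zero _ h0)).hasDerivWithinAt
    (s := Metric.sphere (0 : ℂ) R)
  refine h2.congr_deriv ?_
  simp only [Multiset.map_replicate, Multiset.prod_replicate]
  push_cast
  field_simp
  ring

open Polynomial in
/-- The exponential polynomial `∑ P_i^(t₀)(z) ν_i^t₁ exp(B ν_i z)`. -/
noncomputable def expF {ι : Type*} [Fintype ι] (P : ι → ℂ[X]) (ν : ι → ℝ) (B : ℝ) (t₀ t₁ : ℕ)
    (z : ℂ) : ℂ :=
  ∑ i, (derivative^[t₀] (P i)).eval z * (ν i : ℂ) ^ t₁ * Complex.exp (B * ν i * z)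

open Polynomial in
/-- The arithmetic counterpart `∑ P_i^(t₀)(s) ν_i^t₁ α_i ^ s` of `expF` at nonnegative integers. -/
noncomputable def expG {ι : Type*} [Fintype ι] (P : ι → ℂ[X]) (ν : ι → ℝ) (α : ι → ℕ) (t₀ t₁ : ℕ)
    (s : ℕ) : ℂ :=
  ∑ i, (derivative^[t₀] (P i)).eval (s : ℂ) * (ν i : ℂ) ^ t₁ * (α i : ℂ) ^ s

lemma expF_hasDerivAt {ι : Type*} [Fintype ι] (P : ι → Polynomial ℂ) (ν : ι → ℝ) (B : ℝ)
    (t₀ t₁ : ℕ) (z : ℂ) : HasDerivAt (expF P ν B t₀ t₁)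
      (expF P ν B (t₀ + 1) t₁ z + B * expF P ν B t₀ (t₁ + 1) z) z := by
  unfold expF
  rw [Finset.mul_sum, ← Finset.sum_add_distrib]
  refine HasDerivAt.fun_sum fun i _ => ?_
  have h1 := ((Polynomial.derivative^[t₀] (P i)).hasDerivAt z).mul_const ((ν i : ℂ) ^ t₁)
  have h2 : HasDerivAt (fun z : ℂ => Complex.exp (B * ν i * z))
      (Complex.exp (B * ν i * z) * (B * ν i * 1)) z :=
    ((hasDerivAt_id z).const_mul (B * ν i : ℂ)).cexp
  refine (h1.mul h2).congr_deriv ?_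
  rw [Function.iterate_succ_apply']
  ring

lemma expF_differentiable {ι : Type*} [Fintype ι] (P : ι → Polynomial ℂ) (ν : ι → ℝ) (B : ℝ)
    (t₀ t₁ : ℕ) : Differentiable ℂ (expF P ν B t₀ t₁) :=
  fun z => (expF_hasDerivAt P ν B t₀ t₁ z).differentiableAt

/-- Integration by parts moves all the derivatives in a confluent divided difference of order `t` onto
`expF`, whose derivatives are the functions `expF` with larger `t₀, t₁`. Their values at `s` therefore
control the divided differences. -/
lemma norm_nodeInt_expF_le {ι : Type*} [Fintype ι] (P : ι → Polynomial ℂ) (ν : ι → ℝ) {B : ℝ}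
    (hB : 0 ≤ B) {R δ : ℝ} {s τ : ℕ} (hs : (s : ℝ) < R)
    (hδ : ∀ t₀ < 2 * τ, ∀ t₁ < 2 * τ, ‖expF P ν B t₀ t₁ s‖ ≤ δ) (t : ℕ) :
    ∀ t₀ t₁, t₀ + t < 2 * τ → t₁ + t < 2 * τ →
      ‖nodeInt (expF P ν B t₀ t₁) R (Multiset.replicate (t + 1) s)‖ ≤
        2 * Real.pi * (1 + B) ^ t * δ := by
  induction t with
  | zero =>
    intro t₀ t₁ h0 h1
    rw [zero_add, Multiset.replicate_one, nodeInt_singleton (expF_differentiable _ _ _ _ _) hs]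
    have := hδ t₀ (by omega) t₁ (by omega)
    simp only [norm_mul, Complex.norm_real, Complex.norm_I, Complex.norm_ofNat, pow_zero, mul_one,
      Real.norm_eq_abs, abs_of_pos Real.pi_pos]
    gcongr
  | succ t ih =>
    intro t₀ t₁ h0 h1
    have hR : 0 ≤ R := (Nat.cast_nonneg s).trans hs.le
    have hm : ∀ x ∈ Multiset.replicate (t + 1) s, (x : ℝ) < R := fun x hx => by
      rw [Multiset.eq_of_mem_replicate hx]; exact hs
    have e := nodeInt_replicate_succ (expF_hasDerivAt P ν B t₀ t₁)
      ((expF_differentiable P ν B (t₀ + 1) t₁).add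
        ((expF_differentiable P ν B t₀ (t₁ + 1)).const_mul (B : ℂ))) hs t
    have e2 : nodeInt (fun z => expF P ν B (t₀ + 1) t₁ z + B * expF P ν B t₀ (t₁ + 1) z) R
        (Multiset.replicate (t + 1) s) =
        nodeInt (expF P ν B (t₀ + 1) t₁) R (Multiset.replicate (t + 1) s) +
        B * nodeInt (expF P ν B t₀ (t₁ + 1)) R (Multiset.replicate (t + 1) s) := by
      unfold nodeInt
      have hi : CircleIntegrable (fun z => (B : ℂ) * (expF P ν B t₀ (t₁ + 1) z /
          ((Multiset.replicate (t + 1) s).map (fun x : ℕ => z - (x : ℂ))).prod)) 0 R :=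
        (node_circleIntegrable (expF_differentiable _ _ _ _ _) hR hm).const_fun_smul
      rw [← circleIntegral.integral_const_mul, ← circleIntegral.integral_add
        (node_circleIntegrable (expF_differentiable _ _ _ _ _) hR hm) hi]
      refine circleIntegral.integral_congr hR fun z _ => ?_
      simp only []
      ring
    have e3 := congrArg norm (e.trans e2)
    have hn : ‖(t + 1 : ℂ)‖ = t + 1 := by exact_mod_cast Complex.norm_natCast (t + 1)
    rw [norm_mul, hn] at e3
    have i1 := ih (t₀ + 1) t₁ (by omega) (by omega)
    have i2 := ih t₀ (t₁ + 1) (by omega) (by omega)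
    calc _ ≤ ((t : ℝ) + 1) * ‖nodeInt (expF P ν B t₀ t₁) R (Multiset.replicate (t + 2) s)‖ := by
          apply le_mul_of_one_le_left (norm_nonneg _)
          linarith [(Nat.cast_nonneg t : (0 : ℝ) ≤ t)]
      _ ≤ 2 * Real.pi * (1 + B) ^ t * δ + B * (2 * Real.pi * (1 + B) ^ t * δ) := by
          rw [e3]
          refine (norm_add_le _ _).trans ?_
          rw [norm_mul, Complex.norm_real, Real.norm_eq_abs, abs_of_nonneg hB]
          gcongr
      _ = _ := by rw [pow_succ]; ring

/-- The extrapolation step: zeros of `G` at `s < x` with multiplicities `2 τ` force its values at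
`s < y` with multiplicities `τ` to be small, provided `F` and `G` are close. -/
lemma extrapolate {ι : Type*} [Fintype ι] (P : ι → Polynomial ℂ) (ν : ι → ℝ) (α : ι → ℕ) {B : ℝ}
    (hB : 0 ≤ B) {δ Bd : ℝ} {τ x y E : ℕ} (hx : 0 < x) (hE : 2 ≤ E)
    (hδ0 : 0 ≤ δ)
    (hδ : ∀ t₀ < 2 * τ, ∀ t₁ < 2 * τ, ∀ s < y,
      ‖expF P ν B t₀ t₁ s - expG P ν α t₀ t₁ s‖ ≤ δ)
    (hBd : ∀ t₀ < τ, ∀ t₁ < τ, ∀ z : ℂ, ‖z‖ = (E * y : ℕ) → ‖expF P ν B t₀ t₁ z‖ ≤ Bd)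
    (hz : ∀ t₀ < 2 * τ, ∀ t₁ < 2 * τ, ∀ s < x, expG P ν α t₀ t₁ s = 0)
    {t₀ t₁ s₁ : ℕ} (ht₀ : t₀ < τ) (ht₁ : t₁ < τ) (hs₁ : x ≤ s₁) (hs₁y : s₁ < y) :
    ‖expG P ν α t₀ t₁ s₁‖ ≤ 2 * Bd * (1 / ((E : ℝ) - 1)) ^ (x * τ) +
      8 * (4 * 8 ^ y * (1 + B)) ^ τ * δ := by
  have hEr : (2 : ℝ) ≤ E := by exact_mod_cast hE
  have hs₁r : (s₁ : ℝ) < y := by exact_mod_cast hs₁y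
  have hxy : (x : ℝ) < y := by exact_mod_cast (by omega : x < y)
  have hy0 : (0 : ℝ) < y := by exact_mod_cast (by omega : 0 < y)
  have hRad : (s₁ : ℝ) < (E * y : ℕ) := by push_cast; nlinarith
  have hBd0 : 0 ≤ Bd := (norm_nonneg _).trans
    (hBd t₀ ht₀ t₁ ht₁ ((E * y : ℕ) : ℂ) (Complex.norm_natCast _))
  have hF : ∀ s < x, ∀ t₀ < 2 * τ, ∀ t₁ < 2 * τ, ‖expF P ν B t₀ t₁ s‖ ≤ δ := by
    intro s hs t₀ h0 t₁ h1
    have := hδ t₀ h0 t₁ h1 s (by omega)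
    rwa [hz t₀ h0 t₁ h1 s hs, sub_zero] at this
  have hx1 : ((x - 1 : ℕ) : ℝ) + 1 = x := by
    rw [Nat.cast_sub hx]; push_cast; ring
  have key := approx_schwarz (expF_differentiable P ν B t₀ t₁) (M := x - 1) (τ := τ)
    (δ := 2 * Real.pi * (1 + B) ^ τ * δ) (by omega : x - 1 < s₁) hRad (hBd t₀ ht₀ t₁ ht₁)
    (fun s hs t ht => (norm_nodeInt_expF_le P ν hB (lt_trans (by exact_mod_cast (by omega : s < s₁))
      hRad) (hF s (by omega)) t t₀ t₁ (by omega) (by omega)).trans (by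
        gcongr
        linarith))
    (by positivity)
  rw [Nat.sub_add_cancel hx, hx1] at key
  have h1 := hδ t₀ (by omega) t₁ (by omega) s₁ hs₁y
  have h2 : ‖expG P ν α t₀ t₁ s₁‖ ≤ ‖expF P ν B t₀ t₁ s₁‖ +
      ‖expF P ν B t₀ t₁ s₁ - expG P ν α t₀ t₁ s₁‖ := by
    rw [← norm_neg (expF P ν B t₀ t₁ s₁ - _), neg_sub]
    simpa using norm_add_le (expF P ν B t₀ t₁ s₁) (expG P ν α t₀ t₁ s₁ - expF P ν B t₀ t₁ s₁)
  push_cast at key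
  have b1 : (E : ℝ) * y / (E * y - s₁) ≤ 2 := by
    rw [div_le_iff₀ (by nlinarith)]; nlinarith
  have b2 : (s₁ : ℝ) / (E * y - (x - 1 : ℕ)) ≤ 1 / ((E : ℝ) - 1) := by
    rw [div_le_div_iff₀ (by nlinarith) (by linarith)]
    nlinarith
  have b20 : 0 ≤ (s₁ : ℝ) / (E * y - (x - 1 : ℕ)) := div_nonneg (by positivity) (by nlinarith)
  have b3 : (x : ℝ) * 2 ^ s₁ * 2 ^ (x - 1) * 4 ≤ 4 * 8 ^ y := by
    have c1 : (x : ℝ) ≤ 2 ^ y := by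
      exact_mod_cast (Nat.lt_two_pow_self).le.trans (Nat.pow_le_pow_right (by norm_num)
        (by omega : x ≤ y))
    have c2 : (2 : ℝ) ^ s₁ ≤ 2 ^ y := pow_le_pow_right₀ (by norm_num) (by omega)
    have c3 : (2 : ℝ) ^ (x - 1) ≤ 2 ^ y := pow_le_pow_right₀ (by norm_num) (by omega)
    calc _ ≤ (2 : ℝ) ^ y * 2 ^ y * 2 ^ y * 4 := by gcongr
      _ = _ := by rw [← mul_pow, ← mul_pow]; norm_num; ring
  have hpi : 2 * Real.pi ≤ 7 := by linarith [Real.pi_lt_d2]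
  have b4 : (1 : ℝ) ≤ (4 * 8 ^ y * (1 + B)) ^ τ := by
    apply one_le_pow₀
    have : (1 : ℝ) ≤ 8 ^ y := one_le_pow₀ (by norm_num)
    nlinarith
  calc _ ≤ ‖expF P ν B t₀ t₁ s₁‖ + δ := by linarith
    _ ≤ (2 * Bd * (1 / ((E : ℝ) - 1)) ^ (x * τ) + (4 * 8 ^ y) ^ τ * (7 * (1 + B) ^ τ * δ)) + δ := by
        gcongr
        refine key.trans ?_
        gcongr
    _ = 2 * Bd * (1 / ((E : ℝ) - 1)) ^ (x * τ) + 7 * (4 * 8 ^ y * (1 + B)) ^ τ * δ + 1 * δ := by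
        rw [mul_pow (4 * 8 ^ y : ℝ)]; ring
    _ ≤ 2 * Bd * (1 / ((E : ℝ) - 1)) ^ (x * τ) + 7 * (4 * 8 ^ y * (1 + B)) ^ τ * δ +
        (4 * 8 ^ y * (1 + B)) ^ τ * δ := by gcongr
    _ = _ := by ring

/-- Replacing `exp (B ν_i)` by the nearby integers `α_i` costs little. -/
lemma norm_expF_sub_expG_le {ι : Type*} [Fintype ι] (P : ι → Polynomial ℂ) {ν : ι → ℝ} {α : ι → ℕ}
    {B Q W w ε : ℝ} {t₀ t₁ s : ℕ} (hα : ∀ i, 0 < α i)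
    (hν0 : ∀ i, 0 ≤ ν i) (hν : ∀ i, ν i ≤ W) (hw : ∀ i, Real.log (α i) ≤ w)
    (hQ : ∀ i, ‖(Polynomial.derivative^[t₀] (P i)).eval (s : ℂ)‖ ≤ Q)
    (hε : ∀ i, |B * ν i * s - s * Real.log (α i)| ≤ ε) (hε1 : ε ≤ 1) :
    ‖expF P ν B t₀ t₁ s - expG P ν α t₀ t₁ s‖ ≤
      Fintype.card ι * (Q * W ^ t₁ * (Real.exp (w * s) * (2 * ε))) := by
  unfold expF expG
  rw [← Finset.sum_sub_distrib]
  refine (norm_sum_le _ _).trans ?_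
  rw [← nsmul_eq_mul, ← Finset.card_univ]
  refine Finset.sum_le_card_nsmul _ _ _ fun i _ => ?_
  have hαr : (0 : ℝ) < α i := by exact_mod_cast hα i
  rw [← mul_sub, norm_mul, norm_mul, norm_pow, Complex.norm_real, Real.norm_eq_abs,
    abs_of_nonneg (hν0 i)]
  have h1 : (α i : ℂ) ^ s = ((Real.exp (s * Real.log (α i)) : ℝ) : ℂ) := by
    rw [← Real.log_pow, Real.exp_log (by positivity)]; push_cast; rfl
  have h2 : Complex.exp (B * ν i * s) = ((Real.exp (B * ν i * s) : ℝ) : ℂ) := by push_cast; rfl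
  rw [h1, h2, ← Complex.ofReal_sub, Complex.norm_real, Real.norm_eq_abs]
  have h3 : Real.exp (B * ν i * s) - Real.exp (s * Real.log (α i)) =
      Real.exp (s * Real.log (α i)) * (Real.exp (B * ν i * s - s * Real.log (α i)) - 1) := by
    rw [mul_sub, ← Real.exp_add]; ring_nf
  rw [h3, abs_mul, abs_of_pos (Real.exp_pos _)]
  have h4 := Real.abs_exp_sub_one_le ((hε i).trans hε1)
  have hQ0 : 0 ≤ Q := (norm_nonneg _).trans (hQ i)
  have hW0 : 0 ≤ W := (hν0 i).trans (hν i)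
  have := hQ i
  have := hν i
  have := hν0 i
  have := hε i
  have h5 : s * Real.log (α i) ≤ w * s := by
    rw [mul_comm]
    exact mul_le_mul_of_nonneg_right (hw i) (Nat.cast_nonneg s)
  have h6 := h4.trans (mul_le_mul_of_nonneg_left (hε i) zero_le_two)
  gcongr

/-! ### The auxiliary function -/

open Polynomial in
/-- The polynomial coefficients `∑ p(m, i) β_m` of the auxiliary function, in terms of Feldman's
polynomials `β_m`. -/
noncomputable def auxPoly {ι : Type*} (S N : ℕ) (p : Fin N × ι → ℤ) (i : ι) : ℂ[X] :=
  ∑ m : Fin N, C ((p (m, i) : ℤ) : ℂ) * feldman S m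

/-- The frequency `i₁ v / u + i₂`, which is close to `log (a ^ i₁ b ^ i₂) / log b`. -/
noncomputable def auxFreq {L : ℕ} (u v : ℕ) (i : Fin L × Fin L) : ℝ :=
  ((i.1 : ℕ) : ℝ) * v / u + ((i.2 : ℕ) : ℝ)

/-- The integers `a ^ i₁ b ^ i₂`. -/
def auxBase {L : ℕ} (a b : ℕ) (i : Fin L × Fin L) : ℕ := a ^ (i.1 : ℕ) * b ^ (i.2 : ℕ)

open Polynomial in
lemma iterate_derivative_auxPoly {ι : Type*} (S N : ℕ) (p : Fin N × ι → ℤ) (i : ι) (t : ℕ)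
    (z : ℂ) : (derivative^[t] (auxPoly S N p i)).eval z =
      ∑ m : Fin N, ((p (m, i) : ℤ) : ℂ) * (derivative^[t] (feldman S m)).eval z := by
  rw [auxPoly, iterate_derivative_sum, eval_finsetSum]
  refine Finset.sum_congr rfl fun m _ => ?_
  rw [iterate_derivative_C_mul, eval_mul, eval_C]

lemma norm_auxPoly_derivative_le {ι : Type*} {S ℓ : ℕ} (hS : 0 < S) (p : Fin (ℓ * S) × ι → ℤ)
    {H : ℝ} (hp : ∀ j, |(p j : ℝ)| ≤ H) (i : ι) (ρ : ℕ) {z : ℂ} (hz : ‖z‖ ≤ ρ) (t : ℕ) :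
    ‖(Polynomial.derivative^[t] (auxPoly S _ p i)).eval z‖ ≤
      (ℓ * S : ℕ) * (H * (t.factorial * 2 ^ (ℓ * (ρ + 1 + S)))) := by
  rw [iterate_derivative_auxPoly]
  refine (norm_sum_le _ _).trans ?_
  have : (ℓ * S : ℕ) = (Finset.univ : Finset (Fin (ℓ * S))).card := by simp
  conv_rhs => rw [this]
  rw [← nsmul_eq_mul]
  refine Finset.sum_le_card_nsmul _ _ _ fun m _ => ?_
  rw [norm_mul]
  have h1 : ‖((p (m, i) : ℤ) : ℂ)‖ = |(p (m, i) : ℝ)| := by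
    rw [Complex.norm_intCast]
  rw [h1]
  have h0 : 0 ≤ H := (abs_nonneg _).trans (hp (m, i))
  gcongr
  · exact hp _
  · exact norm_feldman_derivative_le hS m.2 ρ hz t

lemma auxFreq_nonneg {L : ℕ} (u v : ℕ) (i : Fin L × Fin L) : 0 ≤ auxFreq u v i := by
  unfold auxFreq; positivity

lemma auxFreq_le {L : ℕ} {u v : ℕ} {V : ℝ} (hV : (v : ℝ) / u ≤ V) (i : Fin L × Fin L) :
    auxFreq u v i ≤ L * (V + 1) := by
  unfold auxFreq
  have h1 : ((i.1 : ℕ) : ℝ) ≤ L := by exact_mod_cast i.1.2.le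
  have h2 : ((i.2 : ℕ) : ℝ) ≤ L := by exact_mod_cast i.2.2.le
  have h0 : 0 ≤ (v : ℝ) / u := by positivity
  rw [mul_div_assoc, mul_add, mul_one]
  gcongr

lemma log_auxBase {L a b : ℕ} (ha : 0 < a) (hb : 0 < b) (i : Fin L × Fin L) :
    Real.log (auxBase a b i) = (i.1 : ℕ) * Real.log a + (i.2 : ℕ) * Real.log b := by
  have ha' : (a : ℝ) ≠ 0 := by positivity
  have hb' : (b : ℝ) ≠ 0 := by positivity
  unfold auxBase
  push_cast
  rw [Real.log_mul (pow_ne_zero _ ha') (pow_ne_zero _ hb'), Real.log_pow, Real.log_pow]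

lemma auxBase_pos {L a b : ℕ} (ha : 0 < a) (hb : 0 < b) (i : Fin L × Fin L) :
    0 < auxBase a b i := by unfold auxBase; positivity

lemma log_auxBase_le {L a b : ℕ} (ha : 0 < a) (hb : 0 < b) (i : Fin L × Fin L) :
    Real.log (auxBase a b i) ≤ L * (Real.log a + Real.log b) := by
  rw [log_auxBase ha hb, mul_add]
  have h1 : ((i.1 : ℕ) : ℝ) ≤ L := by exact_mod_cast i.1.2.le
  have h2 : ((i.2 : ℕ) : ℝ) ≤ L := by exact_mod_cast i.2.2.le
  have h3 : 0 ≤ Real.log a := Real.log_natCast_nonneg a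
  have h4 : 0 ≤ Real.log b := Real.log_natCast_nonneg b
  gcongr

/-- Integrality of the coefficients of the linear forms to which Siegel's lemma is applied. -/
lemma exists_int_entry {L S d u : ℕ} (v a b : ℕ) (hS : 0 < S)
    (hd : ∀ k, 0 < k → k ≤ S → k ∣ d) (hu : 0 < u) (t₀ t₁ s m : ℕ) (i : Fin L × Fin L) :
    ∃ n : ℤ, (n : ℂ) = (d : ℂ) ^ t₀ * (u : ℂ) ^ t₁ *
      ((Polynomial.derivative^[t₀] (feldman S m)).eval (s : ℂ) * (auxFreq u v i : ℂ) ^ t₁ *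
        (auxBase a b i : ℂ) ^ s) := by
  obtain ⟨n, hn⟩ := intDeriv_feldman hS hd m t₀ s
  refine ⟨n * (((i.1 : ℕ) * v + (i.2 : ℕ) * u : ℕ) : ℤ) ^ t₁ * (auxBase a b i : ℤ) ^ s, ?_⟩
  have hu' : (u : ℂ) ≠ 0 := by exact_mod_cast hu.ne'
  have h1 : (u : ℂ) * (auxFreq u v i : ℂ) = (((i.1 : ℕ) * v + (i.2 : ℕ) * u : ℕ) : ℂ) := by
    unfold auxFreq; push_cast; field_simp
  push_cast at h1 ⊢
  rw [← hn, ← h1, mul_pow]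
  ring

/-- The denominator of `expG` divides `d ^ t₀ * u ^ t₁`. -/
lemma exists_int_expG {L S N d u : ℕ} (v a b : ℕ) (hS : 0 < S)
    (hd : ∀ k, 0 < k → k ≤ S → k ∣ d) (hu : 0 < u) (p : Fin N × (Fin L × Fin L) → ℤ)
    (t₀ t₁ s : ℕ) : ∃ n : ℤ, (n : ℂ) = (d : ℂ) ^ t₀ * (u : ℂ) ^ t₁ *
      expG (auxPoly S N p) (auxFreq u v) (auxBase a b) t₀ t₁ s := by
  choose f hf using fun (m : ℕ) (i : Fin L × Fin L) =>
    exists_int_entry v a b hS hd hu t₀ t₁ s m i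
  refine ⟨∑ i, ∑ m : Fin N, p (m, i) * f m i, ?_⟩
  unfold expG
  push_cast
  rw [Finset.mul_sum]
  refine Finset.sum_congr rfl fun i _ => ?_
  rw [iterate_derivative_auxPoly, Finset.sum_mul, Finset.sum_mul, Finset.mul_sum]
  refine Finset.sum_congr rfl fun m _ => ?_
  rw [hf]
  ring

/-- The auxiliary function cannot have too many zeros. -/
lemma auxiliary_trivial {L S N : ℕ} (u v : ℕ) {a b : ℕ} (ha : 0 < a) (hb : 0 < b)
    (hab : ∀ i j i' j' : ℕ, a ^ i * b ^ j = a ^ i' * b ^ j' → i = i' ∧ j = j')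
    (p : Fin N × (Fin L × Fin L) → ℤ)
    (hz : ∀ s < L * L * N, expG (auxPoly S N p) (auxFreq u v) (auxBase a b) 0 0 s = 0) :
    p = 0 := by
  have hP := exp_poly_eq_zero (fun i : Fin L × Fin L => (auxBase a b i : ℂ)) ?_ ?_ (L * L * N)
    (fun _ => N) (auxPoly S N p) (by simp) ?_ ?_
  · funext ⟨m, i⟩
    have h1 := hP i
    unfold auxPoly at h1
    have h2 := (feldman_linearIndependent S).comp (fun m : Fin N => (m : ℕ)) Fin.val_injective
    rw [Fintype.linearIndependent_iff] at h2
    have h3 := h2 (fun m => ((p (m, i) : ℤ) : ℂ)) (by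
      rw [← h1]
      refine Finset.sum_congr rfl fun m _ => ?_
      rw [Polynomial.smul_eq_C_mul]; rfl) m
    exact_mod_cast h3
  · intro i j hij
    have : auxBase a b i = auxBase a b j := Nat.cast_injective (R := ℂ) hij
    have := hab _ _ _ _ this
    exact Prod.ext (Fin.ext this.1) (Fin.ext this.2)
  · intro i
    exact_mod_cast (auxBase_pos ha hb i).ne'
  · intro i
    unfold auxPoly
    rcases Nat.eq_zero_or_pos N with rfl | hN
    · simp
    refine (Polynomial.degree_sum_le _ _).trans_lt ?_
    rw [Finset.sup_lt_iff (by exact_mod_cast WithBot.bot_lt_coe N)]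
    intro m _
    rw [← Polynomial.smul_eq_C_mul]
    refine (Polynomial.degree_smul_le _ _).trans_lt ?_
    rw [feldman_degree]
    exact_mod_cast m.2
  · intro s hs
    have := hz s hs
    unfold expG at this
    rw [← this]
    simp

/-- Siegel's lemma: with twice as many unknowns as equations there is an auxiliary function with
small integral coefficients and prescribed zeros. -/
lemma exists_auxiliary {L S ℓ T d u v a b : ℕ} {V : ℝ} (hS : 0 < S) (hT : 0 < T)
    (hd0 : 0 < d) (hd : ∀ k, 0 < k → k ≤ S → k ∣ d) (hu : 0 < u) (ha : 0 < a) (hb : 0 < b)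
    (hV : (v : ℝ) / u ≤ V) (hV1 : 1 ≤ V) (hL : 0 < L)
    (hcard : ℓ * S * (L * L) = 2 * (S * (T * T))) :
    ∃ p : Fin (ℓ * S) × (Fin L × Fin L) → ℤ, p ≠ 0 ∧
      (∀ j, |(p j : ℝ)| ≤ (ℓ * S * (L * L) : ℕ) * ((d : ℝ) ^ T * (u : ℝ) ^ T *
        (T.factorial * 2 ^ (ℓ * (S + 1 + S)) * (L * (V + 1)) ^ T *
          Real.exp (L * (Real.log a + Real.log b) * S)))) ∧
      ∀ t₀ < T, ∀ t₁ < T, ∀ s < S,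
        expG (auxPoly S _ p) (auxFreq u v) (auxBase a b) t₀ t₁ s = 0 := by
  choose f hf using fun (t₀ t₁ s m : ℕ) (i : Fin L × Fin L) =>
    exists_int_entry v a b hS hd hu t₀ t₁ s m i
  set X : ℝ := (d : ℝ) ^ T * (u : ℝ) ^ T *
        (T.factorial * 2 ^ (ℓ * (S + 1 + S)) * (L * (V + 1)) ^ T *
          Real.exp (L * (Real.log a + Real.log b) * S)) with hX
  let M : Matrix (Fin S × (Fin T × Fin T)) (Fin (ℓ * S) × (Fin L × Fin L)) ℤ :=
    fun r c => f r.2.1 r.2.2 r.1 c.1 c.2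
  have hd1 : (1 : ℝ) ≤ d := by exact_mod_cast hd0
  have hu1 : (1 : ℝ) ≤ u := by exact_mod_cast hu
  have hL1 : (1 : ℝ) ≤ L := by exact_mod_cast hL
  have hW1 : (1 : ℝ) ≤ L * (V + 1) := by nlinarith
  have hA : 0 ≤ Real.log a := Real.log_natCast_nonneg a
  have hB : 0 ≤ Real.log b := Real.log_natCast_nonneg b
  have hX1 : 1 ≤ X := by
    rw [hX]
    have h1 : (1 : ℝ) ≤ T.factorial := by exact_mod_cast T.factorial_pos
    have h2 : (1 : ℝ) ≤ 2 ^ (ℓ * (S + 1 + S)) := one_le_pow₀ (by norm_num)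
    have h3 : (1 : ℝ) ≤ (L * (V + 1)) ^ T := one_le_pow₀ hW1
    have h4 : 1 ≤ Real.exp (L * (Real.log a + Real.log b) * S) :=
      Real.one_le_exp (by positivity)
    have h5 : (1 : ℝ) ≤ d ^ T := one_le_pow₀ hd1
    have h6 : (1 : ℝ) ≤ u ^ T := one_le_pow₀ hu1
    exact one_le_mul_of_one_le_of_one_le (one_le_mul_of_one_le_of_one_le h5 h6)
      (one_le_mul_of_one_le_of_one_le (one_le_mul_of_one_le_of_one_le
        (one_le_mul_of_one_le_of_one_le h1 h2) h3) h4)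
  let _ : SeminormedAddCommGroup (Matrix (Fin S × (Fin T × Fin T))
      (Fin (ℓ * S) × (Fin L × Fin L)) ℤ) := Matrix.seminormedAddCommGroup
  have hM : ‖M‖ ≤ X := by
    rw [Matrix.norm_le_iff (by linarith)]
    intro ⟨s, t₀, t₁⟩ ⟨m, i⟩
    have h1 : ‖M (s, t₀, t₁) (m, i)‖ = ‖((f t₀ t₁ s m i : ℤ) : ℂ)‖ := by
      rw [Complex.norm_intCast, Int.norm_eq_abs]
    rw [h1, hf]
    simp only [norm_mul, norm_pow, Complex.norm_natCast, Complex.norm_real, Real.norm_eq_abs,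
      abs_of_nonneg (auxFreq_nonneg u v i)]
    have h2 : ‖(Polynomial.derivative^[(t₀ : ℕ)] (feldman S m)).eval ((s : ℕ) : ℂ)‖ ≤
        T.factorial * 2 ^ (ℓ * (S + 1 + S)) := by
      refine (norm_feldman_derivative_le hS m.2 S ?_ t₀).trans ?_
      · rw [Complex.norm_natCast]; exact_mod_cast s.2.le
      · gcongr
        exact t₀.2.le
    have h3 : auxFreq u v i ^ (t₁ : ℕ) ≤ (L * (V + 1)) ^ T :=
      (pow_le_pow_left₀ (auxFreq_nonneg u v i) (auxFreq_le hV i) _).trans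
        (pow_le_pow_right₀ hW1 t₁.2.le)
    have h4 : (auxBase a b i : ℝ) ^ (s : ℕ) ≤ Real.exp (L * (Real.log a + Real.log b) * S) := by
      have hpos : (0 : ℝ) < auxBase a b i := by exact_mod_cast auxBase_pos ha hb i
      rw [← Real.log_le_iff_le_exp (by positivity), Real.log_pow, mul_comm]
      have := log_auxBase_le ha hb i
      have hs : ((s : ℕ) : ℝ) ≤ S := by exact_mod_cast s.2.le
      gcongr
    have := auxFreq_nonneg u v i
    rw [hX]
    gcongr
    · exact t₀.2.le
    · exact t₁.2.le
  have hcr : Fintype.card (Fin S × (Fin T × Fin T)) = S * (T * T) := by simp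
  have hcc : Fintype.card (Fin (ℓ * S) × (Fin L × Fin L)) = ℓ * S * (L * L) := by simp
  have hpos : 0 < S * (T * T) := by positivity
  obtain ⟨p, hp0, hp, hpn⟩ := Int.Matrix.exists_ne_zero_int_vec_norm_le M
    (by rw [hcr, hcc]; omega) (by rw [hcr]; exact hpos)
  refine ⟨p, hp0, fun j => ?_, fun t₀ h0 t₁ h1 s hs => ?_⟩
  · have e : ((Fintype.card (Fin S × (Fin T × Fin T)) : ℝ) /
        (Fintype.card (Fin (ℓ * S) × (Fin L × Fin L)) -
          Fintype.card (Fin S × (Fin T × Fin T)))) = 1 := by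
      rw [hcr, hcc, hcard]
      have : ((S * (T * T) : ℕ) : ℝ) ≠ 0 := by exact_mod_cast hpos.ne'
      rw [div_eq_one_iff_eq] <;> push_cast at this ⊢ <;> [ring; skip]
      intro h; apply this; linarith
    rw [e, Real.rpow_one, hcc] at hpn
    have h1 : |(p j : ℝ)| = ‖p j‖ := (Int.norm_eq_abs _).symm
    rw [h1]
    refine ((norm_le_pi_norm p j).trans hpn).trans ?_
    gcongr
    exact max_le hX1 hM
  · have hrow := congrFun hp (⟨s, hs⟩, ⟨t₀, h0⟩, ⟨t₁, h1⟩)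
    simp only [Matrix.mulVec, dotProduct, Pi.zero_apply] at hrow
    have hrow' : ∑ c : Fin (ℓ * S) × (Fin L × Fin L), (f t₀ t₁ s c.1 c.2 : ℂ) * (p c : ℂ) = 0 := by
      exact_mod_cast hrow
    have hdu : (d : ℂ) ^ t₀ * (u : ℂ) ^ t₁ ≠ 0 := by
      have h1 : (d : ℂ) ≠ 0 := by exact_mod_cast hd0.ne'
      have h2 : (u : ℂ) ≠ 0 := by exact_mod_cast hu.ne'
      positivity
    refine (mul_eq_zero_iff_left hdu).mp ?_
    rw [← hrow', Fintype.sum_prod_type_right]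
    unfold expG
    rw [Finset.mul_sum]
    refine Finset.sum_congr rfl fun i _ => ?_
    rw [iterate_derivative_auxPoly, Finset.sum_mul, Finset.sum_mul, Finset.mul_sum]
    refine Finset.sum_congr rfl fun m _ => ?_
    rw [hf]
    ring

/-! ### Lower bound for linear forms in two logarithms -/

lemma two_pow_le_exp (n : ℕ) : (2 : ℝ) ^ n ≤ Real.exp n := by
  rw [← Real.exp_one_pow]
  gcongr
  linarith [Real.exp_one_gt_d9]

lemma norm_expF_le {ι : Type*} [Fintype ι] (P : ι → Polynomial ℂ) {ν : ι → ℝ} {B Q W ρ : ℝ}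
    (hB : 0 ≤ B) {t₀ t₁ : ℕ} {z : ℂ} (hν0 : ∀ i, 0 ≤ ν i) (hν : ∀ i, ν i ≤ W)
    (hQ : ∀ i, ‖(Polynomial.derivative^[t₀] (P i)).eval z‖ ≤ Q) (hz : ‖z‖ ≤ ρ) :
    ‖expF P ν B t₀ t₁ z‖ ≤ Fintype.card ι * (Q * W ^ t₁ * Real.exp (B * W * ρ)) := by
  unfold expF
  refine (norm_sum_le _ _).trans ?_
  rw [← nsmul_eq_mul, ← Finset.card_univ]
  refine Finset.sum_le_card_nsmul _ _ _ fun i _ => ?_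
  rw [norm_mul, norm_mul, norm_pow, Complex.norm_real, Real.norm_eq_abs, abs_of_nonneg (hν0 i),
    Complex.norm_exp]
  have hQ0 : 0 ≤ Q := (norm_nonneg _).trans (hQ i)
  have hW0 : 0 ≤ W := (hν0 i).trans (hν i)
  have := hQ i
  have := hν i
  have := hν0 i
  have h1 : ((B : ℂ) * ν i * z).re ≤ B * W * ρ := by
    refine (Complex.re_le_norm _).trans ?_
    rw [norm_mul, norm_mul, Complex.norm_real, Complex.norm_real, Real.norm_eq_abs,
      Real.norm_eq_abs, abs_of_nonneg hB, abs_of_nonneg (hν0 i)]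
    gcongr
  gcongr

/-- The main term of the extrapolation inequality, after clearing denominators. -/
lemma main_term_le {S T x τ : ℕ} {E : ℝ} (hSx : S ≤ x) (hS : 0 < S) (hτ : 0 < τ)
    (hE30 : Real.exp 30 ≤ E - 1) (hTS : (T : ℝ) * S ≤ 2 * (x * τ)) :
    2 * Real.exp (S + 9 * T * S + x * τ) * (1 / (E - 1)) ^ (x * τ) * Real.exp (7 * S * τ) ≤
      1 / 2 := by
  have hSx' : (S : ℝ) ≤ x := by exact_mod_cast hSx
  have hS1 : (1 : ℝ) ≤ S := by exact_mod_cast hS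
  have hτ1 : (1 : ℝ) ≤ τ := by exact_mod_cast hτ
  have r1 : (1 / (E - 1)) ^ (x * τ) ≤ Real.exp (-(30 * (x * τ))) := by
    have : (1 / (E - 1)) ≤ Real.exp (-30) := by
      rw [Real.exp_neg, one_div]
      exact inv_anti₀ (Real.exp_pos _) hE30
    have h0 : 0 ≤ (1 / (E - 1)) := by
      have := (Real.exp_pos 30).le.trans hE30
      positivity
    calc _ ≤ Real.exp (-30) ^ (x * τ) := pow_le_pow_left₀ h0 this _
      _ = _ := by rw [← Real.exp_nat_mul]; push_cast; ring_nf
  have hSτ : (S : ℝ) * τ ≤ x * τ := mul_le_mul_of_nonneg_right hSx' (by linarith)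
  have hSS : (S : ℝ) ≤ S * τ := le_mul_of_one_le_right (by linarith) hτ1
  calc _ ≤ 2 * Real.exp (S + 9 * T * S + x * τ) * Real.exp (-(30 * (x * τ))) *
        Real.exp (7 * S * τ) :=
        mul_le_mul_of_nonneg_right (mul_le_mul_of_nonneg_left r1 (by positivity)) (by positivity)
    _ = 2 * Real.exp (S + 9 * T * S + x * τ + -(30 * (x * τ)) + 7 * S * τ) := by
      rw [Real.exp_add _ (7 * S * τ : ℝ), Real.exp_add _ (-(30 * (x * τ)) : ℝ)]; ring
    _ ≤ 2 * Real.exp (-3) :=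
      mul_le_mul_of_nonneg_left (Real.exp_le_exp.mpr (by linarith)) (by norm_num)
    _ ≤ 1 / 2 := by
      rw [Real.exp_neg]
      have : (4 : ℝ) ≤ Real.exp 3 := by linarith [Real.add_one_le_exp (3 : ℝ)]
      have := inv_anti₀ (by norm_num) this
      linarith

set_option maxHeartbeats 1000000 in
/-- One round of extrapolation for the auxiliary function: a nonzero value would be an integer
smaller than `1` after clearing denominators. -/
lemma vanish_step {L S T d u v a b E x y τ : ℕ} {V : ℝ} (hS : 0 < S)
    (hd0 : 0 < d) (hd : ∀ k, 0 < k → k ≤ S → k ∣ d) (hd6 : (d : ℝ) ≤ Real.exp (6 * S))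
    (hu : 0 < u) (huS : (u : ℝ) ≤ Real.exp S) (ha : 0 < a) (hb : 0 < b)
    (hV : (v : ℝ) / u ≤ V) (hV1 : 1 ≤ V) (hL : 0 < L)
    (hK : (2 * L * S * (L * L) : ℕ) * ((T.factorial : ℝ) * (L * (V + 1)) ^ T) ≤ Real.exp S)
    (hE : 2 ≤ E) (hE30 : Real.exp 30 ≤ (E : ℝ) - 1)
    (p : Fin (2 * L * S) × (Fin L × Fin L) → ℤ) (hp : ∀ j, |(p j : ℝ)| ≤ Real.exp (9 * T * S))
    (hSx : S ≤ x) (hxy : x ≤ y) (hτ : 0 < τ) (hτT : 2 * τ ≤ T)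
    (hgrow : L * E * (4 + Real.log b * (V + 1)) * y ≤ x * τ) (hTS : (T : ℝ) * S ≤ 2 * (x * τ))
    (hε1 : L * y * |u * Real.log a - v * Real.log b| ≤ 1)
    (herr : 8 * (4 * 8 ^ y * (1 + Real.log b)) ^ τ *
      (Real.exp (S + 9 * T * S + (6 * L + L * (Real.log a + Real.log b)) * y) *
        (2 * (L * y * |u * Real.log a - v * Real.log b|))) * Real.exp (7 * S * τ) < 1 / 2)
    (hz : ∀ t₀ < 2 * τ, ∀ t₁ < 2 * τ, ∀ s < x,
      expG (auxPoly S _ p) (auxFreq u v) (auxBase a b) t₀ t₁ s = 0) :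
    ∀ t₀ < τ, ∀ t₁ < τ, ∀ s < y,
      expG (auxPoly S _ p) (auxFreq u v) (auxBase a b) t₀ t₁ s = 0 := by
  intro t₀ ht₀ t₁ ht₁ s₁ hs₁
  rcases lt_or_ge s₁ x with hsx | hsx
  · exact hz t₀ (by omega) t₁ (by omega) s₁ hsx
  set Λ := |u * Real.log a - v * Real.log b| with hΛ
  set A := Real.log a with hAdef
  set B := Real.log b with hBdef
  have hA : 0 ≤ A := Real.log_natCast_nonneg a
  have hB : 0 ≤ B := Real.log_natCast_nonneg b
  have hL1 : (1 : ℝ) ≤ L := by exact_mod_cast hL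
  have hW1 : (1 : ℝ) ≤ L * (V + 1) := by nlinarith
  have hu1 : (1 : ℝ) ≤ u := by exact_mod_cast hu
  have hd1 : (1 : ℝ) ≤ d := by exact_mod_cast hd0
  have hSx' : (S : ℝ) ≤ x := by exact_mod_cast hSx
  have hxy' : (x : ℝ) ≤ y := by exact_mod_cast hxy
  have hS1 : (1 : ℝ) ≤ S := by exact_mod_cast hS
  have hτ1 : (1 : ℝ) ≤ τ := by exact_mod_cast hτ
  have hΛ0 : 0 ≤ Λ := abs_nonneg _
  have hcard : (Fintype.card (Fin L × Fin L) : ℝ) = L * L := by simp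
  -- every sum over the coefficients costs at most `exp S`
  have hsum : ∀ (t₀ t₁ ρ : ℕ) (g : ℝ), t₀ < T → t₁ < T → 0 ≤ g →
      (Fintype.card (Fin L × Fin L) : ℝ) * (((2 * L * S : ℕ) * (Real.exp (9 * T * S) *
        (t₀.factorial * 2 ^ (2 * L * (ρ + 1 + S))))) * (L * (V + 1)) ^ t₁ * g) ≤
      Real.exp (S + 9 * T * S + 2 * L * (ρ + 1 + S)) * g := by
    intro t₀ t₁ ρ g h0 h1 hg
    have f1 : (t₀.factorial : ℝ) ≤ T.factorial := by exact_mod_cast Nat.factorial_le h0.le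
    have f2 : (L * (V + 1)) ^ t₁ ≤ (L * (V + 1)) ^ T := pow_le_pow_right₀ hW1 h1.le
    have f3 := two_pow_le_exp (2 * L * (ρ + 1 + S))
    push_cast at f3
    rw [hcard]
    calc _ = (((2 * L * S * (L * L) : ℕ) : ℝ) * (t₀.factorial * (L * (V + 1)) ^ t₁)) *
          Real.exp (9 * T * S) * 2 ^ (2 * L * (ρ + 1 + S)) * g := by push_cast; ring
      _ ≤ (((2 * L * S * (L * L) : ℕ) : ℝ) * (T.factorial * (L * (V + 1)) ^ T)) *
          Real.exp (9 * T * S) * 2 ^ (2 * L * (ρ + 1 + S)) * g := by gcongr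
      _ ≤ Real.exp S * Real.exp (9 * T * S) * Real.exp (2 * L * (ρ + 1 + S)) * g := by gcongr
      _ = _ := by rw [← Real.exp_add, ← Real.exp_add]
  have hεb : ∀ s < y, ∀ i : Fin L × Fin L,
      |B * auxFreq u v i * s - s * Real.log (auxBase a b i)| ≤ L * y * Λ := by
    intro s hs i
    have hs' : (s : ℝ) ≤ y := by exact_mod_cast hs.le
    have hi : ((i.1 : ℕ) : ℝ) ≤ L := by exact_mod_cast i.1.2.le
    have e : B * auxFreq u v i * s - s * Real.log (auxBase a b i) =
        -((i.1 : ℕ) * s * (u * A - v * B) / u) := by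
      rw [log_auxBase ha hb, auxFreq]
      field_simp
      ring
    rw [e, abs_neg, abs_div, abs_mul, abs_of_nonneg (by positivity : (0 : ℝ) ≤ (i.1 : ℕ) * s),
      abs_of_pos (by linarith : (0 : ℝ) < u), ← hΛ]
    refine (div_le_self (by positivity) hu1).trans ?_
    gcongr
  set δ := Real.exp (S + 9 * T * S + (6 * L + L * (A + B)) * y) * (2 * (L * y * Λ)) with hδdef
  set Bd := Real.exp (S + 9 * T * S + x * τ) with hBddef
  have hδ : ∀ t₀ < 2 * τ, ∀ t₁ < 2 * τ, ∀ s < y,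
      ‖expF (auxPoly S _ p) (auxFreq u v) B t₀ t₁ s -
        expG (auxPoly S _ p) (auxFreq u v) (auxBase a b) t₀ t₁ s‖ ≤ δ := by
    intro t₀ h0 t₁ h1 s hs
    have hs' : (s : ℝ) ≤ y := by exact_mod_cast hs.le
    have hs1 : (s : ℝ) + 1 ≤ y := by exact_mod_cast hs
    refine (norm_expF_sub_expG_le (auxPoly S _ p) (auxBase_pos ha hb) (auxFreq_nonneg u v)
      (auxFreq_le hV) (log_auxBase_le ha hb)
      (fun i => norm_auxPoly_derivative_le hS p hp i s (by rw [Complex.norm_natCast]) t₀)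
      (hεb s hs) hε1).trans ?_
    refine (hsum t₀ t₁ s _ (by omega) (by omega) (by positivity)).trans ?_
    rw [hδdef, ← mul_assoc, ← Real.exp_add]
    refine mul_le_mul_of_nonneg_right (Real.exp_le_exp.mpr ?_) (by positivity)
    have q1 : (2 : ℝ) * L * (s + 1 + S) ≤ 2 * L * (3 * y) := by
      gcongr; linarith
    have q2 : L * (A + B) * s ≤ L * (A + B) * y := by gcongr
    linarith
  have hBd : ∀ t₀ < τ, ∀ t₁ < τ, ∀ z : ℂ, ‖z‖ = (E * y : ℕ) →
      ‖expF (auxPoly S _ p) (auxFreq u v) B t₀ t₁ z‖ ≤ Bd := by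
    intro t₀ h0 t₁ h1 z hz
    refine (norm_expF_le (auxPoly S _ p) hB (auxFreq_nonneg u v) (auxFreq_le hV)
      (fun i => norm_auxPoly_derivative_le hS p hp i (E * y) hz.le t₀) hz.le).trans ?_
    refine (hsum t₀ t₁ (E * y) _ (by omega) (by omega) (by positivity)).trans ?_
    rw [hBddef, ← Real.exp_add]
    refine Real.exp_le_exp.mpr ?_
    have hE2 : (2 : ℝ) ≤ E := by exact_mod_cast hE
    have q1 : (2 : ℝ) * L * ((E * y : ℕ) + 1 + S) ≤ 2 * L * (2 * (E * y)) := by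
      gcongr; push_cast; nlinarith
    have q2 : (2 : ℝ) * L * (2 * (E * y)) + B * (L * (V + 1)) * (E * y : ℕ) =
        L * E * (4 + B * (V + 1)) * y := by push_cast; ring
    linarith
  have key := extrapolate (auxPoly S _ p) (auxFreq u v) (auxBase a b) hB (by omega) hE
    (by positivity) hδ hBd hz ht₀ ht₁ hsx hs₁
  -- clear denominators
  obtain ⟨m, hm⟩ := exists_int_expG v a b hS hd hu p t₀ t₁ s₁
  have hdu : (d : ℝ) ^ t₀ * (u : ℝ) ^ t₁ ≤ Real.exp (7 * S * τ) := by
    calc (d : ℝ) ^ t₀ * (u : ℝ) ^ t₁ ≤ (d : ℝ) ^ τ * (u : ℝ) ^ τ := by gcongr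
      _ ≤ Real.exp (6 * S) ^ τ * Real.exp S ^ τ := by gcongr
      _ = _ := by
        rw [← mul_pow, ← Real.exp_add, ← Real.exp_nat_mul]; ring_nf
  have hmain : 2 * Bd * (1 / ((E : ℝ) - 1)) ^ (x * τ) * Real.exp (7 * S * τ) ≤ 1 / 2 :=
    main_term_le hSx hS hτ hE30 hTS
  have hlt : ‖(m : ℂ)‖ < 1 := by
    rw [hm, norm_mul, norm_mul, norm_pow, norm_pow, Complex.norm_natCast, Complex.norm_natCast]
    calc _ ≤ Real.exp (7 * S * τ) * (2 * Bd * (1 / ((E : ℝ) - 1)) ^ (x * τ) +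
          8 * (4 * 8 ^ y * (1 + B)) ^ τ * δ) := by gcongr
      _ = 2 * Bd * (1 / ((E : ℝ) - 1)) ^ (x * τ) * Real.exp (7 * S * τ) +
          8 * (4 * 8 ^ y * (1 + B)) ^ τ * δ * Real.exp (7 * S * τ) := by ring
      _ < 1 := by linarith
  have hm0 : m = 0 := by
    rw [Complex.norm_intCast] at hlt
    have : |m| < 1 := by exact_mod_cast hlt
    exact Int.abs_lt_one_iff.mp this
  rw [hm0] at hm
  have hdu0 : (d : ℂ) ^ t₀ * (u : ℂ) ^ t₁ ≠ 0 := by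
    have h1 : (d : ℂ) ≠ 0 := by exact_mod_cast hd0.ne'
    have h2 : (u : ℂ) ≠ 0 := by exact_mod_cast hu.ne'
    positivity
  rw [Int.cast_zero] at hm
  exact (mul_eq_zero_iff_left hdu0).mp hm.symm

/-- The error terms coming from the linear form are negligible once it is at most `exp (-c S)` with
`c` large in terms of the parameters. -/
lemma error_terms_le {L T S y Y τ : ℕ} {A B Λ : ℝ} (hA : 0 ≤ A) (hB : 0 ≤ B) (hΛ0 : 0 ≤ Λ)
    (hS : 0 < S) (hy : y ≤ Y * S) (hτ : τ ≤ T)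
    (hΛ : Λ ≤ Real.exp (-((1 + 9 * T + (6 * L + L * (A + B)) * Y + 2 * L * Y +
      T * (2 + 3 * Y + B) + 7 * T + 4) * S))) :
    L * y * Λ ≤ 1 ∧ 8 * (4 * 8 ^ y * (1 + B)) ^ τ *
      (Real.exp (S + 9 * T * S + (6 * L + L * (A + B)) * y) * (2 * (L * y * Λ))) *
        Real.exp (7 * S * τ) < 1 / 2 := by
  have hS1 : (1 : ℝ) ≤ S := by exact_mod_cast hS
  have hy' : (y : ℝ) ≤ Y * S := by exact_mod_cast hy
  have hτ' : (τ : ℝ) ≤ T := by exact_mod_cast hτ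
  set W : ℝ := 1 + 9 * T + (6 * L + L * (A + B)) * Y + T * (2 + 3 * Y + B) + 7 * T with hW
  have hW0 : 0 ≤ W := by positivity
  have h1 : 2 * (L * y * Λ) ≤ Real.exp (-((W + 4) * S)) := by
    have e1 : 2 * L * (y : ℝ) ≤ Real.exp (2 * L * Y * S) := by
      have : 2 * L * (y : ℝ) ≤ 2 * L * Y * S := by
        calc 2 * L * (y : ℝ) ≤ 2 * L * (Y * S) := by gcongr
          _ = _ := by ring
      linarith [Real.add_one_le_exp (2 * L * Y * S : ℝ)]
    calc 2 * (L * y * Λ) = 2 * L * y * Λ := by ring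
      _ ≤ Real.exp (2 * L * Y * S) * _ := mul_le_mul e1 hΛ hΛ0 (Real.exp_pos _).le
      _ = _ := by rw [← Real.exp_add]; congr 1; rw [hW]; ring
  have h0 : 0 ≤ L * y * Λ := by positivity
  refine ⟨?_, ?_⟩
  · have : Real.exp (-((W + 4) * S)) ≤ 1 := Real.exp_le_one_iff.mpr (by
      have : 0 ≤ (W + 4) * S := by positivity
      linarith)
    linarith
  have h2 : (4 * 8 ^ y * (1 + B)) ^ τ ≤ Real.exp (T * (2 + 3 * Y + B) * S) := by
    have f1 : (4 : ℝ) ≤ Real.exp 2 := by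
      have := two_pow_le_exp 2
      norm_num at this; exact this
    have f2 : (8 : ℝ) ^ y ≤ Real.exp (3 * y) := by
      have := two_pow_le_exp (3 * y)
      rw [pow_mul] at this; push_cast at this; norm_num at this; exact this
    have f3 : 1 + B ≤ Real.exp B := by linarith [Real.add_one_le_exp B]
    calc (4 * 8 ^ y * (1 + B)) ^ τ ≤ (Real.exp 2 * Real.exp (3 * y) * Real.exp B) ^ τ := by gcongr
      _ = Real.exp (τ * (2 + 3 * y + B)) := by
        rw [← Real.exp_add, ← Real.exp_add, ← Real.exp_nat_mul]
      _ ≤ _ := by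
        refine Real.exp_le_exp.mpr ?_
        have g1 : 2 + 3 * y + B ≤ (2 + 3 * Y + B) * S := by nlinarith
        calc τ * (2 + 3 * y + B) ≤ T * ((2 + 3 * Y + B) * S) := by gcongr
          _ = _ := by ring
  have h3 : Real.exp (S + 9 * T * S + (6 * L + L * (A + B)) * y) ≤
      Real.exp (S + 9 * T * S + (6 * L + L * (A + B)) * (Y * S)) := by gcongr
  have h4 : Real.exp (7 * S * τ) ≤ Real.exp (7 * S * T) := by gcongr
  have h5 : Real.exp (-(4 * (S : ℝ))) ≤ Real.exp (-4) := Real.exp_le_exp.mpr (by linarith)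
  have h6 : Real.exp (-4) < 1 / 16 := by
    have : (16 : ℝ) < Real.exp 4 := by
      have h := Real.exp_one_gt_d9
      calc (16 : ℝ) = 2 ^ 4 := by norm_num
        _ < Real.exp 1 ^ 4 := by gcongr; linarith
        _ = _ := by rw [← Real.exp_nat_mul]; norm_num
    rw [Real.exp_neg, ← one_div]
    exact one_div_lt_one_div_of_lt (by norm_num) this
  calc _ ≤ 8 * Real.exp (T * (2 + 3 * Y + B) * S) *
      (Real.exp (S + 9 * T * S + (6 * L + L * (A + B)) * (Y * S)) * Real.exp (-((W + 4) * S))) *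
        Real.exp (7 * S * T) := by gcongr
    _ = 8 * Real.exp (-(4 * (S : ℝ))) := by
      rw [mul_assoc, mul_assoc, ← Real.exp_add, ← Real.exp_add, ← Real.exp_add]
      congr 2; rw [hW]; ring
    _ < 1 / 2 := by linarith

/-- If all parameters are in the stated ranges, repeated extrapolation makes the auxiliary function
vanish at so many integers that it is zero; hence the linear form cannot be tiny. -/
lemma not_tiny {n E S d u v a b : ℕ} {V : ℝ} (hS : 0 < S)
    (hd0 : 0 < d) (hd : ∀ k, 0 < k → k ≤ S → k ∣ d) (hd6 : (d : ℝ) ≤ Real.exp (6 * S))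
    (hu : 0 < u) (huS : (u : ℝ) ≤ Real.exp S) (ha : 0 < a) (hb : 0 < b)
    (hab : ∀ i j i' j' : ℕ, a ^ i * b ^ j = a ^ i' * b ^ j' → i = i' ∧ j = j')
    (hV : (v : ℝ) / u ≤ V) (hV1 : 1 ≤ V) (hE : 2 ≤ E) (hE30 : Real.exp 30 ≤ (E : ℝ) - 1)
    (hn : 2 * (E * 2 ^ 12 * (4 + Real.log b * (V + 1))) + 7 + Real.log a + Real.log b ≤ 2 ^ n)
    {L T Y : ℕ} (hL : L = 2 ^ (4 * n)) (hT : T = 2 ^ (6 * n)) (hY : Y = 2 ^ (12 * (n + 1)))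
    (hK : (2 * L * S * (L * L) : ℕ) * ((T.factorial : ℝ) * (L * (V + 1)) ^ T) ≤ Real.exp S) :
    Real.exp (-((1 + 9 * T + (6 * L + L * (Real.log a + Real.log b)) * Y + 2 * L * Y +
      T * (2 + 3 * Y + Real.log b) + 7 * T + 4) * S)) < |u * Real.log a - v * Real.log b| := by
  by_contra! hΛ
  have hA : 0 ≤ Real.log a := Real.log_natCast_nonneg a
  have hB : 0 ≤ Real.log b := Real.log_natCast_nonneg b
  have hS1 : (1 : ℝ) ≤ S := by exact_mod_cast hS
  have hL0 : 0 < L := by rw [hL]; positivity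
  have hT0 : 0 < T := by rw [hT]; positivity
  have hn1 : 1 ≤ n := by
    by_contra h
    have : n = 0 := by omega
    subst this
    have : 0 ≤ 2 * (E * 2 ^ 12 * (4 + Real.log b * (V + 1))) := by positivity
    norm_num at hn; linarith
  have hcard : 2 * L * S * (L * L) = 2 * (S * (T * T)) := by
    have : L * (L * L) = T * T := by rw [hL, hT, ← pow_add, ← pow_add, ← pow_add]; congr 1; ring
    rw [← this]; ring
  -- the number of unknowns `2 L S * L ^ 2` is twice the number of equations `S * T ^ 2`
  obtain ⟨p, hp0, hp, hz⟩ := exists_auxiliary (ℓ := 2 * L) hS hT0 hd0 hd hu ha hb hV hV1 hL0 hcard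
  have hp' : ∀ j, |(p j : ℝ)| ≤ Real.exp (9 * T * S) := by
    intro j
    refine (hp j).trans ?_
    have e2 := two_pow_le_exp (2 * L * (S + 1 + S))
    push_cast at e2
    calc _ = ((2 * L * S * (L * L) : ℕ) * ((T.factorial : ℝ) * (L * (V + 1)) ^ T)) * (d : ℝ) ^ T *
          (u : ℝ) ^ T * 2 ^ (2 * L * (S + 1 + S)) *
          Real.exp (L * (Real.log a + Real.log b) * S) := by ring
      _ ≤ Real.exp S * Real.exp (6 * S) ^ T * Real.exp S ^ T * Real.exp (2 * L * (S + 1 + S)) *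
          Real.exp (L * (Real.log a + Real.log b) * S) := by gcongr
      _ = Real.exp (S + T * (6 * S) + T * S + 2 * L * (S + 1 + S) +
          L * (Real.log a + Real.log b) * S) := by
        rw [← Real.exp_nat_mul, ← Real.exp_nat_mul, Real.exp_add, Real.exp_add, Real.exp_add,
          Real.exp_add]
      _ ≤ _ := by
        refine Real.exp_le_exp.mpr ?_
        have hL1 : (1 : ℝ) ≤ L := by exact_mod_cast hL0
        have g1 : L * (7 + Real.log a + Real.log b) ≤ T := by
          have : (T : ℝ) = L * 2 ^ (2 * n) := by
            rw [hT, hL]; push_cast; rw [← pow_add]; congr 1; ring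
          rw [this]
          have h2 : (2 : ℝ) ^ n ≤ 2 ^ (2 * n) := pow_le_pow_right₀ (by norm_num) (by omega)
          have : 0 ≤ 2 * (E * 2 ^ 12 * (4 + Real.log b * (V + 1))) := by positivity
          gcongr
          linarith
        have g2 : (2 : ℝ) * L * (S + 1 + S) ≤ 2 * L * (3 * S) := by gcongr; linarith
        have g3 : (1 + 7 * T + 6 * L + L * (Real.log a + Real.log b)) * S ≤ 9 * T * S := by
          gcongr
          nlinarith
        linarith
  -- `n + 1` rounds of extrapolation: `T / 2 ^ j` is still much larger than `L` throughout, while the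
  -- number of zeros finally exceeds `2 ^ (12 n + 1) S = L ^ 2 * (2 L S)`
  have hind : ∀ j ≤ n + 1, ∀ t₀ < 2 ^ (6 * n - j), ∀ t₁ < 2 ^ (6 * n - j), ∀ s < 2 ^ (12 * j) * S,
      expG (auxPoly S _ p) (auxFreq u v) (auxBase a b) t₀ t₁ s = 0 := by
    intro j
    induction j with
    | zero =>
      intro _
      rw [Nat.sub_zero, ← hT]
      simpa using hz
    | succ j ih =>
      intro hj
      have hpow : 2 * 2 ^ (6 * n - (j + 1)) = 2 ^ (6 * n - j) := by
        rw [← pow_succ']; congr 1; omega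
      have hτT : 2 * 2 ^ (6 * n - (j + 1)) ≤ T := by
        rw [hpow, hT]; exact Nat.pow_le_pow_right (by norm_num) (by omega)
      have hy : 2 ^ (12 * (j + 1)) * S ≤ Y * S := by
        rw [hY]; gcongr <;> omega
      obtain ⟨hε1, herr⟩ := error_terms_le (τ := 2 ^ (6 * n - (j + 1))) hA hB (abs_nonneg _) hS hy
        (by omega) hΛ
      refine vanish_step (T := T) (E := E) (V := V) (x := 2 ^ (12 * j) * S) hS hd0 hd hd6 hu huS ha
        hb hV hV1 hL0 hK hE hE30 p hp' (Nat.le_mul_of_pos_left _ (by positivity)) ?_ (by positivity)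
        hτT ?_ ?_ hε1 herr ?_
      · gcongr <;> omega
      · have g1 : (2 : ℝ) ^ (4 * n) * 2 ^ n ≤ 2 * 2 ^ (6 * n - (j + 1)) := by
          rw [← pow_add, ← pow_succ']
          exact pow_le_pow_right₀ (by norm_num) (by omega)
        have g2 : 2 ^ (4 * n) * (E * 2 ^ 12 * (4 + Real.log b * (V + 1))) ≤
            (2 : ℝ) ^ (6 * n - (j + 1)) := by
          have : 2 ^ (4 * n) * (2 * (E * 2 ^ 12 * (4 + Real.log b * (V + 1)))) ≤
              (2 : ℝ) ^ (4 * n) * 2 ^ n := by gcongr; linarith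
          linarith
        rw [hL]
        push_cast
        calc _ = 2 ^ (12 * j) * S * (2 ^ (4 * n) * (E * 2 ^ 12 * (4 + Real.log b * (V + 1)))) := by
              rw [mul_add 12, pow_add]; ring
          _ ≤ _ := by gcongr
      · rw [hT]
        have : 2 ^ (6 * n) * S ≤ 2 * (2 ^ (12 * j) * S * 2 ^ (6 * n - (j + 1))) := by
          calc 2 ^ (6 * n) * S ≤ 2 ^ (12 * j + (6 * n - j)) * S := by
                gcongr <;> omega
            _ = 2 ^ (12 * j) * S * (2 * 2 ^ (6 * n - (j + 1))) := by rw [hpow, pow_add]; ring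
            _ = _ := by ring
        exact_mod_cast this
      · rw [hpow]
        exact ih (by omega)
  refine hp0 (auxiliary_trivial u v ha hb hab p fun s hs =>
    hind (n + 1) le_rfl 0 (by positivity) 0 (by positivity) s (hs.trans_le ?_))
  calc L * L * (2 * L * S) = 2 ^ (12 * n + 1) * S := by
        rw [hL, pow_succ, show 12 * n = 4 * n + 4 * n + 4 * n by ring, pow_add, pow_add]; ring
    _ ≤ _ := by gcongr <;> omega

set_option maxHeartbeats 1000000 in
/-- A lower bound `u ^ (-C)`, for large `u`, for the linear form `u log a - v log b` when `a` and `b`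
are multiplicatively independent. -/
theorem linear_form_lower_bound {a b : ℕ} (ha : 1 < a) (hb : 1 < b)
    (hab : ∀ i j i' j' : ℕ, a ^ i * b ^ j = a ^ i' * b ^ j' → i = i' ∧ j = j') :
    ∃ C : ℝ, 0 < C ∧ ∃ u₀ : ℕ, ∀ u ≥ u₀, ∀ v : ℕ,
      Real.exp (-(C * Real.log u)) ≤ |u * Real.log a - v * Real.log b| := by
  have hA : 0 < Real.log a := Real.log_pos (by exact_mod_cast ha)
  have hB : 0 < Real.log b := Real.log_pos (by exact_mod_cast hb)
  set V : ℝ := (Real.log a + 1) / Real.log b + 1 with hVdef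
  have hV1 : 1 ≤ V := by rw [hVdef]; linarith [show 0 < (Real.log a + 1) / Real.log b by positivity]
  obtain ⟨E, hE30⟩ := exists_nat_ge (Real.exp 30 + 1)
  have hE : 2 ≤ E := by
    have : (2 : ℝ) ≤ E := by linarith [Real.add_one_le_exp 30]
    exact_mod_cast this
  obtain ⟨n, hn⟩ := pow_unbounded_of_one_lt
    (2 * (E * 2 ^ 12 * (4 + Real.log b * (V + 1))) + 7 + Real.log a + Real.log b) one_lt_two
  obtain ⟨L, hL⟩ : ∃ L, L = 2 ^ (4 * n) := ⟨_, rfl⟩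
  obtain ⟨T, hT⟩ : ∃ T, T = 2 ^ (6 * n) := ⟨_, rfl⟩
  obtain ⟨Y, hY⟩ : ∃ Y, Y = 2 ^ (12 * (n + 1)) := ⟨_, rfl⟩
  obtain ⟨c, hc⟩ : ∃ c, c = 1 + 9 * T + (6 * L + L * (Real.log a + Real.log b)) * Y + 2 * L * Y +
      T * (2 + 3 * Y + Real.log b) + 7 * T + 4 := ⟨_, rfl⟩
  have hc0 : 0 < c := by rw [hc]; positivity
  obtain ⟨k, hk⟩ : ∃ k, k = 2 * L * (L * L) * ((T.factorial : ℝ) * (L * (V + 1)) ^ T) := ⟨_, rfl⟩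
  refine ⟨2 * c, by positivity, ⌈Real.exp (max 1 (2 * k))⌉₊, fun u hu v => ?_⟩
  have hu' : Real.exp (max 1 (2 * k)) ≤ u := Nat.ceil_le.mp hu
  have hu0 : (0 : ℝ) < u := (Real.exp_pos _).trans_le hu'
  have hlog : max 1 (2 * k) ≤ Real.log u := (Real.le_log_iff_exp_le hu0).mpr hu'
  have hlog1 := (le_max_left _ _).trans hlog
  have hlogk := (le_max_right _ _).trans hlog
  have hSl : Real.log u ≤ ⌈Real.log u⌉₊ := Nat.le_ceil _
  have hSu : (⌈Real.log u⌉₊ : ℝ) < Real.log u + 1 := Nat.ceil_lt_add_one (by linarith)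
  set S := ⌈Real.log u⌉₊ with hS
  have hS1 : (1 : ℝ) ≤ S := hlog1.trans hSl
  have hexp : Real.exp (-(2 * c * Real.log u)) ≤ Real.exp (-(c * S)) :=
    Real.exp_le_exp.mpr (by nlinarith)
  by_contra! hΛ
  have hΛ1 : |u * Real.log a - v * Real.log b| < 1 :=
    hΛ.trans_le (Real.exp_le_one_iff.mpr (by
      have : 0 ≤ 2 * c * Real.log u := by positivity
      linarith))
  have hV : (v : ℝ) / u ≤ V := by
    have h1 : v * Real.log b ≤ u * (Real.log a + 1) := by
      have : (1 : ℝ) ≤ u := by linarith [Real.add_one_le_exp (max 1 (2 * k)), le_max_left 1 (2 * k)]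
      linarith [(abs_lt.mp hΛ1).1]
    have : (v : ℝ) / u ≤ (Real.log a + 1) / Real.log b := by
      rw [div_le_div_iff₀ hu0 hB]; linarith
    linarith
  obtain ⟨d, hd0, hd, hd6⟩ := exists_common_multiple S
  have := not_tiny (S := S) (n := n) (E := E) (v := v) (by exact_mod_cast hS1) hd0 hd hd6
    (by exact_mod_cast hu0) (by rw [← Real.exp_log hu0]; exact Real.exp_le_exp.mpr hSl)
    (by omega) (by omega) hab hV hV1 hE (by linarith) hn.le hL hT hY (by
      have := Real.quadratic_le_exp_of_nonneg (x := (S : ℝ)) (by linarith)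
      have e : ((2 * L * S * (L * L) : ℕ) : ℝ) * ((T.factorial : ℝ) * (L * (V + 1)) ^ T) = S * k := by
        rw [hk]; push_cast; ring
      rw [e]
      nlinarith)
  rw [← hc] at this
  linarith

/-! ### Gaps between power-products -/

/-- The lower bound of `linear_form_lower_bound` without restrictions on `u` or the sign of `v`. -/
lemma exists_lower_bound {a b : ℕ} (ha : 1 < a) (hb : 1 < b)
    (hab : ∀ i j i' j' : ℕ, a ^ i * b ^ j = a ^ i' * b ^ j' → i = i' ∧ j = j') :
    ∃ c : ℝ, 0 < c ∧ ∃ κ : ℕ, ∀ q : ℕ, 0 < q → ∀ p : ℤ,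
      c / (q : ℝ) ^ κ ≤ |q * Real.log a - p * Real.log b| := by
  have hA : 0 < Real.log a := Real.log_pos (by exact_mod_cast ha)
  have hB : 0 < Real.log b := Real.log_pos (by exact_mod_cast hb)
  have ha0 : (0 : ℝ) < a := by positivity
  have hb0 : (0 : ℝ) < b := by positivity
  obtain ⟨C, hC, u₀, hu₀⟩ := linear_form_lower_bound ha hb hab
  have hne : ∀ q : ℕ, 0 < q → ∀ p : ℤ, q * Real.log a - p * Real.log b ≠ 0 := by
    intro q hq p h
    have hq' : (0 : ℝ) < q := by exact_mod_cast hq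
    have hp : 0 ≤ p := by
      by_contra! hp
      have : (p : ℝ) < 0 := by exact_mod_cast hp
      nlinarith
    lift p to ℕ using hp
    have h1 : Real.log ((a : ℝ) ^ q) = Real.log ((b : ℝ) ^ p) := by
      rw [Real.log_pow, Real.log_pow]
      push_cast at h
      linarith
    have h2 : (a : ℝ) ^ q = (b : ℝ) ^ p :=
      Real.log_injOn_pos (Set.mem_Ioi.mpr (by positivity)) (Set.mem_Ioi.mpr (by positivity)) h1
    have h3 : a ^ q = b ^ p := by exact_mod_cast h2
    have := (hab q 0 0 p (by simpa using h3)).1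
    omega
  -- the finitely many small `q` are handled one at a time
  have hsmall : ∀ N : ℕ, ∃ c : ℝ, 0 < c ∧ ∀ q : ℕ, 0 < q → q < N → ∀ p : ℤ,
      c ≤ |q * Real.log a - p * Real.log b| := by
    intro N
    induction N with
    | zero => exact ⟨1, one_pos, fun q _ h => absurd h (Nat.not_lt_zero q)⟩
    | succ N ih =>
      obtain ⟨c, hc, h⟩ := ih
      rcases Nat.eq_zero_or_pos N with rfl | hN
      · exact ⟨1, one_pos, fun q h1 h2 => by omega⟩
      set f := |N * Real.log a - (round (N * Real.log a / Real.log b) : ℤ) * Real.log b| with hf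
      have hf0 : 0 < f := abs_pos.mpr (hne N hN _)
      refine ⟨min c f, lt_min hc hf0, fun q h1 h2 p => ?_⟩
      rcases Nat.lt_succ_iff_lt_or_eq.mp h2 with h3 | rfl
      · exact (min_le_left _ _).trans (h q h1 h3 p)
      · refine (min_le_right _ _).trans ?_
        have e : ∀ z : ℤ, |q * Real.log a - z * Real.log b| =
            |q * Real.log a / Real.log b - z| * Real.log b := by
          intro z
          rw [← abs_of_pos hB, ← abs_mul, abs_of_pos hB]
          congr 1
          field_simp
        rw [hf, e, e]
        exact mul_le_mul_of_nonneg_right (round_le _ _) hB.le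
  obtain ⟨c, hc, hcs⟩ := hsmall (max u₀ 1)
  refine ⟨min (min c 1) (Real.log a), by positivity, ⌈C⌉₊, fun q hq p => ?_⟩
  have hq1 : (1 : ℝ) ≤ q := by exact_mod_cast hq
  have hqk : (1 : ℝ) ≤ (q : ℝ) ^ ⌈C⌉₊ := one_le_pow₀ hq1
  rcases lt_or_ge q (max u₀ 1) with h | h
  · refine (div_le_self (by positivity) hqk).trans ?_
    exact ((min_le_left _ _).trans (min_le_left _ _)).trans (hcs q hq h p)
  rcases lt_or_ge p 0 with hp | hp
  · refine (div_le_self (by positivity) hqk).trans ((min_le_right _ _).trans ?_)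
    refine le_trans ?_ (le_abs_self _)
    have : (p : ℝ) < 0 := by exact_mod_cast hp
    nlinarith
  · lift p to ℕ using hp
    refine le_trans ?_ (hu₀ q ((le_max_left _ _).trans h) p)
    have h1 : min (min c 1) (Real.log a) ≤ 1 := (min_le_left _ _).trans (min_le_right _ _)
    calc _ ≤ 1 / (q : ℝ) ^ ⌈C⌉₊ := by gcongr
      _ = Real.exp (-(⌈C⌉₊ * Real.log q)) := by
        rw [Real.exp_neg, Real.exp_nat_mul, Real.exp_log (by linarith), one_div]
      _ ≤ _ := by
        refine Real.exp_le_exp.mpr (neg_le_neg ?_)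
        have := Real.log_nonneg hq1
        gcongr
        exact Nat.le_ceil C

/-- Adding multiples of a small nonzero integer combination `k A - j B` to a multiple of `B`, one
gets within `|k A - j B|` below any prescribed large `X`, with nonnegative coefficients. -/
lemma exists_close_below {A B X ξ : ℝ} (hB : 0 < B) {k : ℕ} {j : ℤ}
    (hξ : ξ = k * A - j * B) (hξ0 : ξ ≠ 0) (hj : 0 ≤ j)
    (hX : (B / |ξ| + 1) * j + 1 ≤ X / B) :
    ∃ u v : ℕ, u * A + v * B ≤ X ∧ X - |ξ| ≤ u * A + v * B := by
  have hj' : (0 : ℝ) ≤ j := by exact_mod_cast hj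
  have hfl := Int.floor_le (X / B)
  have hlf := Int.lt_floor_add_one (X / B)
  set w := ⌊X / B⌋ with hw
  rw [le_div_iff₀ hB] at hfl
  rw [div_lt_iff₀ hB] at hlf
  rcases lt_or_gt_of_ne hξ0 with h | h
  · rw [abs_of_neg h] at hX ⊢
    have hpos : 0 < -ξ := by linarith
    have hy0 : 0 ≤ ((w + 1) * B - X) / (-ξ) := div_nonneg (by linarith) hpos.le
    have hm1 := Nat.le_ceil (((w + 1) * B - X) / (-ξ))
    have hm2 := Nat.ceil_lt_add_one hy0
    set m := ⌈((w + 1) * B - X) / (-ξ)⌉₊ with hm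
    have hm3 : (m : ℝ) ≤ B / (-ξ) + 1 := by
      have : ((w + 1) * B - X) / (-ξ) ≤ B / (-ξ) := by gcongr; linarith
      linarith
    have hv : 0 ≤ w + 1 - m * j := by
      have h1 : (m : ℝ) * j ≤ (B / (-ξ) + 1) * j := by gcongr
      have h2 : X / B < w + 1 := by rw [div_lt_iff₀ hB]; linarith
      have : ((m * j : ℤ) : ℝ) < ((w + 1 : ℤ) : ℝ) := by push_cast; linarith
      have := Int.cast_lt.mp this
      omega
    rw [div_le_iff₀ hpos] at hm1
    rw [← sub_lt_iff_lt_add, lt_div_iff₀ hpos] at hm2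
    have hvc : (((w + 1 - m * j).toNat : ℕ) : ℝ) = w + 1 - m * j := by
      have : (((w + 1 - m * j).toNat : ℤ) : ℝ) = ((w + 1 - m * j : ℤ) : ℝ) := by
        rw [Int.toNat_of_nonneg hv]
      push_cast at this; exact this
    have e : ((m * k : ℕ) : ℝ) * A + ((w + 1 - m * j).toNat : ℕ) * B = (w + 1) * B + m * ξ := by
      rw [hvc, hξ]; push_cast; ring
    refine ⟨m * k, (w + 1 - m * j).toNat, ?_, ?_⟩ <;> rw [e] <;> linarith
  · rw [abs_of_pos h] at hX ⊢
    have hy0 : 0 ≤ (X - w * B) / ξ := div_nonneg (by linarith) h.le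
    have hm1 := Nat.floor_le hy0
    have hm2 := Nat.lt_floor_add_one ((X - w * B) / ξ)
    set m := ⌊(X - w * B) / ξ⌋₊ with hm
    have hm3 : (m : ℝ) ≤ B / ξ + 1 := by
      have : (X - w * B) / ξ ≤ B / ξ := by gcongr; linarith
      linarith
    have hv : 0 ≤ w - m * j := by
      have h1 : (m : ℝ) * j ≤ (B / ξ + 1) * j := by gcongr
      have h2 : X / B < w + 1 := by rw [div_lt_iff₀ hB]; linarith
      have : ((m * j : ℤ) : ℝ) < ((w : ℤ) : ℝ) := by push_cast; linarith
      have := Int.cast_lt.mp this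
      omega
    rw [le_div_iff₀ h] at hm1
    rw [div_lt_iff₀ h] at hm2
    have hvc : (((w - m * j).toNat : ℕ) : ℝ) = w - m * j := by
      have : (((w - m * j).toNat : ℤ) : ℝ) = ((w - m * j : ℤ) : ℝ) := by
        rw [Int.toNat_of_nonneg hv]
      push_cast at this; exact this
    have e : ((m * k : ℕ) : ℝ) * A + ((w - m * j).toNat : ℕ) * B = w * B + m * ξ := by
      rw [hvc, hξ]; push_cast; ring
    refine ⟨m * k, (w - m * j).toNat, ?_, ?_⟩ <;> rw [e] <;> linarith

/-- Below every large `n` there is an integer `a ^ u * b ^ v` within `D n / (log n) ^ δ` of `n`. -/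
lemma exists_gap_bound {a b : ℕ} (ha : 1 < a) (hb : 1 < b)
    (hab : ∀ i j i' j' : ℕ, a ^ i * b ^ j = a ^ i' * b ^ j' → i = i' ∧ j = j') :
    ∃ D : ℝ, 0 < D ∧ ∃ δ : ℝ, 0 < δ ∧ ∃ X₀ : ℝ, ∀ n : ℕ, X₀ ≤ Real.log n →
      ∃ u v : ℕ, a ^ u * b ^ v ≤ n ∧
        (n : ℝ) - (a ^ u * b ^ v : ℕ) ≤ n * (D / (Real.log n) ^ δ) := by
  have hA : 0 < Real.log a := Real.log_pos (by exact_mod_cast ha)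
  have hB : 0 < Real.log b := Real.log_pos (by exact_mod_cast hb)
  obtain ⟨c, hc, κ, hcκ⟩ := exists_lower_bound ha hb hab
  set A := Real.log a with hAdef
  set B := Real.log b with hBdef
  set M := (B / c + 1) * (A / B + 1) with hM
  have hM0 : 0 < M := by positivity
  have hM1 : 1 ≤ M := by
    have h1 : 0 < B / c := by positivity
    have h2 : 0 < A / B := by positivity
    nlinarith
  refine ⟨B * (2 * B * M) ^ (1 / ((κ : ℝ) + 1)), by positivity, 1 / ((κ : ℝ) + 1), by positivity,
    2 * B * M, fun n hn => ?_⟩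
  set X := Real.log n with hX
  set Z := X / (2 * B * M) with hZ
  have hZ1 : 1 ≤ Z := by rw [hZ, one_le_div (by positivity)]; exact hn
  have hX0 : 0 < X := lt_of_lt_of_le (by positivity) hn
  have hn0 : (0 : ℝ) < n := by
    rcases Nat.eq_zero_or_pos n with h | h
    · rw [hX, h] at hX0; simp at hX0
    · exact_mod_cast h
  -- Dirichlet's theorem is applied with `Q` of order `(log n) ^ (1 / (κ + 1))`, the largest choice for
  -- which the exponents stay nonnegative
  have hR1 : 1 ≤ Z ^ (1 / ((κ : ℝ) + 1)) := Real.one_le_rpow hZ1 (by positivity)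
  have hQ1 := Nat.floor_le (zero_le_one.trans hR1)
  have hQ2 := Nat.lt_floor_add_one (Z ^ (1 / ((κ : ℝ) + 1)))
  have hQ0 : 0 < ⌊Z ^ (1 / ((κ : ℝ) + 1))⌋₊ := Nat.floor_pos.mpr hR1
  set Q := ⌊Z ^ (1 / ((κ : ℝ) + 1))⌋₊ with hQ
  have hQ' : (1 : ℝ) ≤ Q := by exact_mod_cast hQ0
  have hQZ : (Q : ℝ) ^ (κ + 1) ≤ Z := by
    calc (Q : ℝ) ^ (κ + 1) ≤ (Z ^ (1 / ((κ : ℝ) + 1))) ^ (κ + 1) := by gcongr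
      _ = Z := by
        rw [← Real.rpow_natCast, ← Real.rpow_mul (by linarith)]
        push_cast
        rw [one_div_mul_cancel (by positivity), Real.rpow_one]
  obtain ⟨j, k, hk0, hkQ, hjk⟩ := Real.exists_int_int_abs_mul_sub_le (A / B) hQ0
  lift k to ℕ using hk0.le
  have hk0' : 0 < k := by exact_mod_cast hk0
  have hk1 : (1 : ℝ) ≤ k := by exact_mod_cast hk0'
  have hkQ' : (k : ℝ) ≤ Q := by exact_mod_cast hkQ
  rw [Int.cast_natCast] at hjk
  have hQlt : 1 / ((Q : ℝ) + 1) < 1 := by rw [div_lt_one (by linarith)]; linarith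
  have hj := abs_le.mp hjk
  have hθ : 0 < A / B := by positivity
  have hj0 : 0 ≤ j := by
    have : (-1 : ℝ) < j := by nlinarith [hj.2]
    have : (-1 : ℤ) < j := by exact_mod_cast this
    omega
  have hjQ : (j : ℝ) ≤ (A / B + 1) * Q := by
    have : k * (A / B) ≤ Q * (A / B) := by gcongr
    linarith [hj.1]
  set ξ := k * A - j * B with hξ
  have hξB : |ξ| ≤ B / (Q + 1) := by
    have : ξ = (k * (A / B) - j) * B := by rw [hξ]; field_simp
    rw [this, abs_mul, abs_of_pos hB, div_eq_mul_one_div B, mul_comm B]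
    exact mul_le_mul_of_nonneg_right hjk hB.le
  have hξc : c / (Q : ℝ) ^ κ ≤ |ξ| := le_trans (by gcongr) (hcκ k hk0' j)
  have hξ0 : 0 < |ξ| := lt_of_lt_of_le (by positivity) hξc
  obtain ⟨u, v, h1, h2⟩ := exists_close_below (X := X) hB hξ (abs_pos.mp hξ0) hj0 (by
    have e1 : B / |ξ| ≤ B / c * (Q : ℝ) ^ κ := by
      calc B / |ξ| ≤ B / (c / (Q : ℝ) ^ κ) := by gcongr
        _ = _ := by field_simp
    have e2 : 1 ≤ (Q : ℝ) ^ κ := one_le_pow₀ hQ'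
    have hj0' : (0 : ℝ) ≤ j := by exact_mod_cast hj0
    have e3 : B / |ξ| + 1 ≤ (B / c + 1) * (Q : ℝ) ^ κ := by linarith
    have e4 : (B / |ξ| + 1) * j ≤ M * Z := by
      calc (B / |ξ| + 1) * j ≤ ((B / c + 1) * (Q : ℝ) ^ κ) * ((A / B + 1) * Q) := by gcongr
        _ = M * (Q : ℝ) ^ (κ + 1) := by rw [hM]; ring
        _ ≤ _ := by gcongr
    have e5 : X / B = M * Z + M * Z := by rw [hZ]; field_simp; ring
    nlinarith)
  have ha0 : (0 : ℝ) < a := by positivity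
  have hb0 : (0 : ℝ) < b := by positivity
  have hexp : ((a ^ u * b ^ v : ℕ) : ℝ) = Real.exp (u * A + v * B) := by
    rw [Real.exp_add, Real.exp_nat_mul, Real.exp_nat_mul, Real.exp_log ha0, Real.exp_log hb0]
    push_cast; rfl
  have hnX : (n : ℝ) = Real.exp X := (Real.exp_log hn0).symm
  refine ⟨u, v, ?_, ?_⟩
  · have : ((a ^ u * b ^ v : ℕ) : ℝ) ≤ n := by rw [hexp, hnX]; exact Real.exp_le_exp.mpr h1
    exact_mod_cast this
  · have e1 : (n : ℝ) * (1 - |ξ|) ≤ (a ^ u * b ^ v : ℕ) := by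
      calc (n : ℝ) * (1 - |ξ|) ≤ Real.exp X * Real.exp (-|ξ|) := by
            rw [hnX]; gcongr; linarith [Real.add_one_le_exp (-|ξ|)]
        _ = Real.exp (X - |ξ|) := by rw [← Real.exp_add]; rfl
        _ ≤ _ := by rw [hexp]; exact Real.exp_le_exp.mpr h2
    have e2 : |ξ| ≤ B * (2 * B * M) ^ (1 / ((κ : ℝ) + 1)) / X ^ (1 / ((κ : ℝ) + 1)) := by
      refine hξB.trans ?_
      have : X ^ (1 / ((κ : ℝ) + 1)) =
          (2 * B * M) ^ (1 / ((κ : ℝ) + 1)) * Z ^ (1 / ((κ : ℝ) + 1)) := by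
        rw [← Real.mul_rpow (by positivity) (by linarith)]
        congr 1
        rw [hZ]; field_simp
      rw [this]
      have hp : 0 < (2 * B * M) ^ (1 / ((κ : ℝ) + 1)) := by positivity
      calc B / (Q + 1) ≤ B / Z ^ (1 / ((κ : ℝ) + 1)) := by gcongr
        _ = _ := by field_simp
    have : (n : ℝ) * |ξ| ≤ n * _ := mul_le_mul_of_nonneg_left e2 hn0.le
    linarith

/-! ### Counting steps -/

/-- If `g` divides by at least `ρ` on the range `[y, n]`, then about `log n / log ρ` iterations
bring `n` below `y`. -/
lemma exists_iterate_lt {g : ℕ → ℕ} {ρ y : ℝ} {n : ℕ} (hρ : 1 < ρ) (hy : 1 ≤ y) (hn : 1 ≤ n)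
    (hg : ∀ m : ℕ, y ≤ m → m ≤ n → (g m : ℝ) ≤ m / ρ) :
    ∃ k : ℕ, (k : ℝ) ≤ Real.log n / Real.log ρ + 1 ∧ (g^[k] n : ℝ) < y := by
  have hlρ : 0 < Real.log ρ := Real.log_pos hρ
  have hn1 : (1 : ℝ) ≤ n := by exact_mod_cast hn
  have hnl : 0 ≤ Real.log n / Real.log ρ := div_nonneg (Real.log_nonneg hn1) hlρ.le
  by_contra! hcon
  have key : ∀ k : ℕ, (k : ℝ) ≤ Real.log n / Real.log ρ + 1 → (g^[k] n : ℝ) ≤ n / ρ ^ k := by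
    intro k
    induction k with
    | zero => simp
    | succ k ih =>
      intro hk
      push_cast at hk
      have h1 := ih (by linarith)
      have h2 := hcon k (by linarith)
      have h3 : (n : ℝ) / ρ ^ k ≤ n := div_le_self (by linarith) (one_le_pow₀ hρ.le)
      have h4 := hg (g^[k] n) h2 (by exact_mod_cast h1.trans h3)
      rw [Function.iterate_succ_apply']
      calc (g (g^[k] n) : ℝ) ≤ g^[k] n / ρ := h4
        _ ≤ n / ρ ^ k / ρ := by gcongr
        _ = _ := by rw [div_div, ← pow_succ]
  have hk1 := Nat.floor_le hnl
  have hk2 := Nat.lt_floor_add_one (Real.log n / Real.log ρ)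
  set k := ⌊Real.log n / Real.log ρ⌋₊ + 1 with hk
  have hk3 : (k : ℝ) ≤ Real.log n / Real.log ρ + 1 := by rw [hk]; push_cast; linarith
  have h1 := key k hk3
  have h2 := hcon k hk3
  have h3 : (n : ℝ) < ρ ^ k := by
    rw [div_lt_iff₀ hlρ] at hk2
    have : Real.log n < Real.log (ρ ^ k) := by rw [Real.log_pow, hk]; push_cast; linarith
    exact (Real.log_lt_log_iff (by linarith) (by positivity)).mp this
  have : (n : ℝ) / ρ ^ k < 1 := (div_lt_one (by positivity)).mpr h3
  linarith

lemma iterate_self_eq_zero {g : ℕ → ℕ} (h0 : g 0 = 0) (hg : ∀ m, 0 < m → g m < m) (n : ℕ) :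
    g^[n] n = 0 := by
  have : ∀ k, g^[k] n ≤ n - k := by
    intro k
    induction k with
    | zero => simp
    | succ k ih =>
      rw [Function.iterate_succ_apply']
      rcases Nat.eq_zero_or_pos (g^[k] n) with h | h
      · rw [h, h0]; omega
      · have := hg _ h; omega
  have := this n
  omega

/-- A map which always divides by a fixed factor, and by a power of the logarithm for large
arguments, reaches `0` in `O(log n / log log n)` steps: the power of the logarithm brings `n` down
to `exp √(log n)`, and the fixed factor does the rest. -/
lemma iterate_bound {g : ℕ → ℕ} (h0 : g 0 = 0) {ρ : ℝ} (hρ : 1 < ρ)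
    (hg : ∀ m : ℕ, 0 < m → (g m : ℝ) ≤ m / ρ) {D δ X₀ : ℝ} (hD : 0 < D) (hδ : 0 < δ)
    (hgap : ∀ m : ℕ, X₀ ≤ Real.log m → (g m : ℝ) ≤ m * (D / (Real.log m) ^ δ)) :
    ∃ K : ℝ, 0 < K ∧ ∀ n : ℕ, 2 < n → ∃ k : ℕ, g^[k] n = 0 ∧
      (k : ℝ) ≤ K * Real.log n / Real.log (Real.log n) := by
  have hlρ : 0 < Real.log ρ := Real.log_pos hρ
  have hglt : ∀ m, 0 < m → g m < m := by
    intro m hm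
    have hm' : (0 : ℝ) < m := by exact_mod_cast hm
    have : (m : ℝ) / ρ < m := div_lt_self hm' hρ
    exact_mod_cast (hg m hm).trans_lt this
  -- beyond `N`, all thresholds below are passed
  have hlog : Filter.Tendsto (fun n : ℕ => Real.log n) Filter.atTop Filter.atTop :=
    Real.tendsto_log_atTop.comp tendsto_natCast_atTop_atTop
  have hev := (hlog.eventually_ge_atTop ((max X₀ 0) ^ 2)).and
    (((Real.tendsto_log_atTop.comp hlog).eventually_ge_atTop (4 / δ * Real.log D)).and
      ((Real.tendsto_log_atTop.comp hlog).eventually_ge_atTop 1))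
  obtain ⟨N, hN⟩ := Filter.eventually_atTop.mp hev
  refine ⟨4 / δ + 2 / Real.log ρ + 2 + N, by positivity, fun n hn => ?_⟩
  have hn3 : (3 : ℝ) ≤ n := by exact_mod_cast hn
  have hX1 : 1 < Real.log n := by
    rw [Real.lt_log_iff_exp_lt (by linarith)]
    linarith [Real.exp_one_lt_d9]
  have hl0 : 0 < Real.log (Real.log n) := Real.log_pos hX1
  have hll : Real.log (Real.log n) ≤ Real.log n := by
    linarith [Real.log_le_sub_one_of_pos (by linarith : 0 < Real.log n)]
  have hratio : 1 ≤ Real.log n / Real.log (Real.log n) := (one_le_div hl0).mpr hll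
  rw [mul_div_assoc]
  set R := Real.log n / Real.log (Real.log n) with hR
  rcases lt_or_ge n N with hnN | hnN
  · refine ⟨n, iterate_self_eq_zero h0 hglt n, ?_⟩
    have h1 : (n : ℝ) ≤ N := by exact_mod_cast hnN.le
    have h2 : 0 ≤ 4 / δ + 2 / Real.log ρ + 2 := by positivity
    nlinarith
  obtain ⟨hN1, hN2, hN3⟩ := hN n hnN
  simp only [Function.comp_apply] at hN2 hN3
  set X := Real.log n with hX
  have hs0 : 0 < √X := Real.sqrt_pos.mpr (by linarith)
  have hs : max X₀ 0 ≤ √X := Real.le_sqrt_of_sq_le hN1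
  have hX0 : 0 < X := by linarith
  -- first phase: down to `exp √X`
  have hlρ₁ : δ / 4 * Real.log X ≤ Real.log (X ^ (δ / 2) / D) := by
    rw [Real.log_div (by positivity) hD.ne', Real.log_rpow hX0]
    have : Real.log D ≤ δ / 4 * Real.log X := by
      calc Real.log D = δ / 4 * (4 / δ * Real.log D) := by field_simp
        _ ≤ _ := by gcongr
    linarith
  have hlρ₁0 : 0 < Real.log (X ^ (δ / 2) / D) := lt_of_lt_of_le (by positivity) hlρ₁
  have hρ₁ : 1 < X ^ (δ / 2) / D := (Real.log_pos_iff (by positivity)).mp hlρ₁0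
  obtain ⟨k₁, hk₁, hm⟩ := exists_iterate_lt (g := g) (y := Real.exp √X) (n := n) hρ₁
    (Real.one_le_exp hs0.le) (by omega) (by
      intro m hm _
      have hm0 : (0 : ℝ) < m := (Real.exp_pos _).trans_le hm
      have hlm : √X ≤ Real.log m := (Real.le_log_iff_exp_le hm0).mpr hm
      refine (hgap m (((le_max_left _ _).trans hs).trans hlm)).trans ?_
      have : X ^ (δ / 2) ≤ Real.log m ^ δ := by
        calc X ^ (δ / 2) = √X ^ δ := by
              rw [Real.sqrt_eq_rpow, ← Real.rpow_mul hX0.le]; congr 1; ring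
          _ ≤ _ := by gcongr
      calc m * (D / Real.log m ^ δ) ≤ m * (D / X ^ (δ / 2)) := by gcongr
        _ = _ := by field_simp)
  have hk₁' : (k₁ : ℝ) ≤ 4 / δ * R + R := by
    have : X / Real.log (X ^ (δ / 2) / D) ≤ X / (δ / 4 * Real.log X) := by gcongr
    have e : X / (δ / 4 * Real.log X) = 4 / δ * R := by rw [hR]; field_simp
    linarith
  set m := g^[k₁] n with hmdef
  have hR2 : 0 ≤ 2 / Real.log ρ * R := by positivity
  have hNR : 0 ≤ N * R := by positivity
  rcases Nat.eq_zero_or_pos m with hm0 | hm0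
  · exact ⟨k₁, hm0, by linarith⟩
  -- second phase: from `exp √X` down to `0`
  obtain ⟨k₂, hk₂, hz⟩ := exists_iterate_lt (g := g) (y := 1) (n := m) hρ le_rfl hm0
    (fun i hi _ => hg i (by
      have : (0 : ℝ) < i := by linarith
      exact_mod_cast this))
  have hsR : √X ≤ 2 * R := by
    have h1 : Real.log X ≤ 2 * √X := by
      have h2 := Real.log_le_sub_one_of_pos hs0
      rw [Real.log_sqrt hX0.le] at h2
      linarith
    rw [hR, mul_div_assoc', le_div_iff₀ hl0]
    nlinarith [Real.mul_self_sqrt hX0.le]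
  have hlm : Real.log m ≤ √X := by
    rw [Real.log_le_iff_le_exp (by exact_mod_cast hm0)]
    exact hm.le
  refine ⟨k₂ + k₁, ?_, ?_⟩
  · rw [Function.iterate_add_apply]
    have : g^[k₂] m < 1 := by exact_mod_cast hz
    exact Nat.lt_one_iff.mp this
  · have : Real.log m / Real.log ρ ≤ 2 * R / Real.log ρ := by gcongr; linarith
    have e : 2 * R / Real.log ρ = 2 / Real.log ρ * R := by ring
    push_cast
    linarith

/-- Every power-product up to `n` bounds the greedy step from above. -/
lemma greedyStep_le {r : ℕ} {b : Fin r → ℕ} {n B : ℕ} (hB : IsPowerProduct r b B) (hBn : B ≤ n) :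
    greedyStep r b n ≤ n - B := by
  unfold greedyStep
  have : B ≤ sSup {B : ℕ | IsPowerProduct r b B ∧ B ≤ n} :=
    le_csSup ⟨n, fun x hx => hx.2⟩ ⟨hB, hBn⟩
  omega

lemma isPowerProduct_pow_mul_pow {r : ℕ} (b : Fin r → ℕ) {i j : Fin r} (hij : i ≠ j) (u v : ℕ) :
    IsPowerProduct r b (b i ^ u * b j ^ v) := by
  refine ⟨fun l => if l = i then u else if l = j then v else 0, ?_⟩
  rw [← Finset.prod_subset (Finset.subset_univ {i, j}), Finset.prod_pair hij]
  · simp [hij.symm]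
  · intro x _ hx
    simp only [Finset.mem_insert, Finset.mem_singleton, not_or] at hx
    simp [hx.1, hx.2]

lemma pow_mul_pow_injective {r : ℕ} {b : Fin r → ℕ} (hb : ∀ j, 1 < b j) (h : MultIndep r b)
    {i j : Fin r} (hij : i ≠ j) (u v u' v' : ℕ) (he : b i ^ u * b j ^ v = b i ^ u' * b j ^ v') :
    u = u' ∧ v = v' := by
  have hi : (b i : ℝ) ≠ 0 := by have := hb i; positivity
  have hj : (b j : ℝ) ≠ 0 := by have := hb j; positivity
  have he' : (b i : ℝ) ^ u * (b j : ℝ) ^ v = (b i : ℝ) ^ u' * (b j : ℝ) ^ v' := by exact_mod_cast he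
  have := h (fun l => if l = i then (u : ℤ) - u' else if l = j then (v : ℤ) - v' else 0) (by
    rw [← Finset.prod_subset (Finset.subset_univ {i, j}), Finset.prod_pair hij]
    · simp only [if_true, hij.symm, if_false]
      rw [zpow_sub₀ hi, zpow_sub₀ hj]
      simp only [zpow_natCast]
      field_simp
      exact he'
    · intro x _ hx
      simp only [Finset.mem_insert, Finset.mem_singleton, not_or] at hx
      simp [hx.1, hx.2])
  have h1 := congrFun this i
  have h2 := congrFun this j
  simp [hij.symm] at h1 h2
  omega

/-- The largest power of one base below `n` already removes a fixed proportion of `n`. -/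
lemma greedyStep_le_mul {r : ℕ} {b : Fin r → ℕ} (hb : ∀ j, 1 < b j) {i j : Fin r} (hij : i ≠ j)
    {n : ℕ} (hn : 0 < n) : (greedyStep r b n : ℝ) ≤ n / ((b i : ℝ) / (b i - 1)) := by
  have hb1 : (1 : ℝ) < b i := by exact_mod_cast hb i
  have hB : IsPowerProduct r b (b i ^ Nat.log (b i) n) := by
    simpa using isPowerProduct_pow_mul_pow b hij (Nat.log (b i) n) 0
  have hBn := Nat.pow_log_le_self (b i) hn.ne'
  have h1 : (greedyStep r b n : ℝ) ≤ n - (b i ^ Nat.log (b i) n : ℕ) := by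
    rw [← Nat.cast_sub hBn]
    exact_mod_cast greedyStep_le hB hBn
  have h2 : (n : ℝ) ≤ b i * (b i ^ Nat.log (b i) n : ℕ) := by
    have := (Nat.lt_pow_succ_log_self (hb i) n).le
    rw [pow_succ'] at this
    exact_mod_cast this
  rw [div_div_eq_mul_div, le_div_iff₀ (by linarith)]
  nlinarith

theorem greedy_terminates_quickly
    (r : ℕ) (hr : 2 ≤ r) (b : Fin r → ℕ) (hb : ∀ j, 1 < b j)
    (hindep : MultIndep r b) :
    ∃ K : ℝ, 0 < K ∧ ∀ n : ℕ, 2 < n →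
      ∃ k : ℕ, (greedyStep r b)^[k] n = 0 ∧
        (k : ℝ) ≤ K * Real.log n / Real.log (Real.log n) := by
  have hij : (⟨0, by omega⟩ : Fin r) ≠ ⟨1, by omega⟩ := by simp
  generalize (⟨0, by omega⟩ : Fin r) = i at hij
  generalize (⟨1, by omega⟩ : Fin r) = j at hij
  obtain ⟨D, hD, δ, hδ, X₀, hgap⟩ := exists_gap_bound (hb i) (hb j)
    (pow_mul_pow_injective hb hindep hij)
  have hb1 : (1 : ℝ) < b i := by exact_mod_cast hb i
  refine iterate_bound (g := greedyStep r b) (by simp [greedyStep])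
    (ρ := (b i : ℝ) / (b i - 1)) ?_ (fun m hm => greedyStep_le_mul hb hij hm) hD hδ (X₀ := X₀)
    fun m hm => ?_
  · rw [one_lt_div (by linarith)]; linarith
  · obtain ⟨u, v, h1, h2⟩ := hgap m hm
    refine le_trans ?_ h2
    rw [← Nat.cast_sub h1]
    exact_mod_cast greedyStep_le (isPowerProduct_pow_mul_pow b hij u v) h1
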